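/- arXiv:1809.10298 — 3 statements merged into one kernel-verified Lean document; each statement's English description precedes it below -/
import Mathlib

section
/- For every odd integer k ≥ 1 and every integer t ≥ 3, every coloring of the edges of the complete graph on (t − 1)·5^{(k−1)/2} + 1 vertices using k colors contains either a rainbow triangle or a monochromatic copy of S_t^+. Together with the matching lower-bound construction, this shows gr_k(K_3 : S_t^+) = (t − 1)·5^{(k−1)/2} + 1 for odd k. -/
open SimpleGraph

/-- `S_t^+`: the star on `t` vertices (center `0`, leaves `1, …, t-1`)
together with one extra edge between the leaves `1` and `2`, forming a triangle. -/
def starPlus (t : ℕ) : SimpleGraph (Fin t) :=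
  SimpleGraph.fromRel (fun a b => a.val = 0 ∨ (a.val = 1 ∧ b.val = 2))

/-- `P_t^+`: the path on `t` vertices `0, 1, …, t-1` (in order) together with
the extra edge between `0` and `2`, forming a triangle at one end. -/
def pathPlus (t : ℕ) : SimpleGraph (Fin t) :=
  SimpleGraph.fromRel (fun a b => b.val = a.val + 1 ∨ (a.val = 0 ∧ b.val = 2))

/-- An edge-coloring `c` of the complete graph on `V` contains a copy of `H`
in color `col`: an injective map of the vertices of `H` into `V` sending every
edge of `H` to a pair colored `col`. -/
def HasCopyIn {V C α : Type*} (c : Sym2 V → C) (col : C) (H : SimpleGraph α) : Prop :=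
  ∃ f : α → V, Function.Injective f ∧ ∀ a b : α, H.Adj a b → c s(f a, f b) = col

/-- An edge-coloring `c` of the complete graph on `V` contains a monochromatic copy of `H`. -/
def HasMonoCopy {V C α : Type*} (c : Sym2 V → C) (H : SimpleGraph α) : Prop :=
  ∃ col : C, HasCopyIn c col H

/-- An edge-coloring `c` of the complete graph on `V` contains a rainbow triangle:
three vertices whose three pairwise edges get pairwise distinct colors. -/
def HasRainbowTriangle {V C : Type*} (c : Sym2 V → C) : Prop :=
  ∃ u v w : V, u ≠ v ∧ u ≠ w ∧ v ≠ w ∧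
    c s(u, v) ≠ c s(u, w) ∧ c s(u, v) ≠ c s(v, w) ∧ c s(u, w) ≠ c s(v, w)

/-- The `k`-color Gallai-Ramsey number `gr_k(K_3 : H)`: the least `n` such that every
`k`-coloring of the edges of `K_n` contains a rainbow triangle or a monochromatic copy of `H`. -/
noncomputable def grK3 (k : ℕ) {α : Type*} (H : SimpleGraph α) : ℕ :=
  sInf {n : ℕ | ∀ c : Sym2 (Fin n) → Fin k, HasRainbowTriangle c ∨ HasMonoCopy c H}

/-- The `2`-color Ramsey number `R(G, H)`: the least `n` such that every red/blue
(`0`/`1`) coloring of the edges of `K_n` contains a red copy of `G` or a blue copy of `H`. -/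
noncomputable def ramsey2 {α β : Type*} (G : SimpleGraph α) (H : SimpleGraph β) : ℕ :=
  sInf {n : ℕ | ∀ c : Sym2 (Fin n) → Fin 2, HasCopyIn c 0 G ∨ HasCopyIn c 1 H}

/-!
A vertex joined in color `i` to a set of at least `t - 1` vertices forbids `i` inside that set. With
two colors this bounds all degrees. With more colors, a coloring without rainbow triangles has a
Gallai partition. If some part sends only one color to the rest, then the part and the rest are
both bounded using one color less. Otherwise every part sees both colors of the partition from
outside, so it is bounded using two colors less, and the neighbors of a vertex outside its part in
each of these two colors are at most twice as many as that bound, which gives the factor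
`1 + 2 + 2 = 5`. Substituting into the pentagon coloring of `K_5` attains this factor.
-/

section MonochromaticStars

variable {V C : Type*} {c : Sym2 V → C} {i r b : C} {t M : ℕ} {A X : Finset V} {K L : Finset C}

/-- All vertices of `A` are joined to the vertex `v ∉ A` by edges of color `i`. -/
def IsMonoStar (c : Sym2 V → C) (i : C) (v : V) (A : Finset V) : Prop :=
  v ∉ A ∧ ∀ x ∈ A, c s(v, x) = i

/-- All edges within the vertex set `X` have their color in `K`. Loops are not edges, so their
values under `c` are ignored. -/
def UsesColors (c : Sym2 V → C) (X : Finset V) (K : Finset C) : Prop :=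
  (X : Set V).Pairwise fun x y => c s(x, y) ∈ K

lemma UsesColors.mono (h : UsesColors c X K) (hAX : A ⊆ X) (hKL : ∀ i ∈ K, i ∈ L) :
    UsesColors c A L :=
  fun _ hx _ hy hxy => hKL _ (h (hAX hx) (hAX hy) hxy)

lemma UsesColors.card_le_one (h : UsesColors c X ∅) : X.card ≤ 1 :=
  Finset.card_le_one.2 fun _ hx _ hy => by_contra fun hxy => Finset.notMem_empty _ (h hx hy hxy)

lemma isMonoStar_filter [DecidableEq C] (i : C) {v : V} (hv : v ∉ A) :
    IsMonoStar c i v {x ∈ A | c s(v, x) = i} :=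
  ⟨fun h => hv (Finset.mem_filter.1 h).1, fun _ hx => (Finset.mem_filter.1 hx).2⟩

lemma starPlus_adj {t : ℕ} {a b : Fin t} : (starPlus t).Adj a b ↔
    a ≠ b ∧ ((a.val = 0 ∨ a.val = 1 ∧ b.val = 2) ∨ b.val = 0 ∨ b.val = 1 ∧ a.val = 2) :=
  SimpleGraph.fromRel_adj _ _ _

lemma exists_injective_fin_of_mem {n : ℕ} {x y : V} (hcard : n + 2 ≤ A.card) (hx : x ∈ A)
    (hy : y ∈ A) (hxy : x ≠ y) :
    ∃ g : Fin (n + 2) → V, Function.Injective g ∧ (∀ j, g j ∈ A) ∧ g 0 = x ∧ g 1 = y := by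
  classical
  have hyx : y ∈ A.erase x := Finset.mem_erase.2 ⟨hxy.symm, hy⟩
  obtain ⟨B, hB, hBn⟩ : ∃ B ⊆ (A.erase x).erase y, B.card = n := by
    refine Finset.exists_subset_card_eq ?_
    rw [Finset.card_erase_of_mem hyx, Finset.card_erase_of_mem hx]
    omega
  let e := (Finset.equivFinOfCardEq hBn).symm
  have he (j : Fin n) : (e j : V) ≠ y ∧ (e j : V) ≠ x ∧ (e j : V) ∈ A := by
    simpa only [Finset.mem_erase] using hB (e j).2
  have hinj : Function.Injective (Fin.cons y fun j => (e j : V) : Fin (n + 1) → V) :=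
    Fin.cons_injective_iff.2
      ⟨fun ⟨j, hj⟩ => (he j).1 hj, Subtype.val_injective.comp e.injective⟩
  refine ⟨Fin.cons x (Fin.cons y fun j => (e j : V)), Fin.cons_injective_iff.2 ⟨?_, hinj⟩,
    Fin.cases hx (Fin.cases hy fun j => (he j).2.2), rfl, rfl⟩
  rintro ⟨j, hj⟩
  induction j using Fin.cases with
  | zero => exact hxy hj.symm
  | succ j => exact (he j).2.1 hj

lemma IsMonoStar.hasCopyIn_starPlus {v x y : V} (hA : IsMonoStar c i v A) (ht : 3 ≤ t)
    (hcard : t - 1 ≤ A.card) (hx : x ∈ A) (hy : y ∈ A) (hxy : x ≠ y) (hc : c s(x, y) = i) :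
    HasCopyIn c i (starPlus t) := by
  obtain ⟨n, rfl⟩ := Nat.exists_eq_add_of_le' ht
  obtain ⟨g, hg, hgA, rfl, rfl⟩ := exists_injective_fin_of_mem (n := n) hcard hx hy hxy
  let f : Fin (n + 3) → V := Fin.cons v g
  have hf {a b : Fin (n + 3)} (hab : a ≠ b) (h : a.val = 0 ∨ a.val = 1 ∧ b.val = 2) :
      c s(f a, f b) = i := by
    rcases h with ha | ⟨ha, hb⟩
    · obtain rfl : a = 0 := Fin.ext ha
      obtain ⟨j, rfl⟩ := Fin.exists_succ_eq.2 hab.symm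
      exact hA.2 _ (hgA j)
    · obtain rfl : a = 1 := Fin.ext ha
      obtain rfl : b = 2 := Fin.ext hb
      exact hc
  refine ⟨f, Fin.cons_injective_iff.2 ⟨?_, hg⟩, fun a b hab => ?_⟩
  · rintro ⟨j, rfl⟩
    exact hA.1 (hgA j)
  · obtain ⟨hne, h | h⟩ := starPlus_adj.1 hab
    · exact hf hne h
    · rw [Sym2.eq_swap]
      exact hf hne.symm h

lemma IsMonoStar.color_ne {v x y : V} (hA : IsMonoStar c i v A) (ht : 3 ≤ t)
    (hm : ¬ HasMonoCopy c (starPlus t)) (hcard : t - 1 ≤ A.card) (hx : x ∈ A) (hy : y ∈ A)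
    (hxy : x ≠ y) : c s(x, y) ≠ i :=
  fun hc => hm ⟨i, hA.hasCopyIn_starPlus ht hcard hx hy hxy hc⟩

lemma IsMonoStar.card_le [DecidableEq C] {v : V} (hA : IsMonoStar c i v A) (ht : 3 ≤ t)
    (hm : ¬ HasMonoCopy c (starPlus t)) (hK : UsesColors c A K) (htM : t - 2 ≤ M)
    (h : UsesColors c A (K.erase i) → A.card ≤ M) : A.card ≤ M := by
  by_contra! hlt
  refine hlt.not_ge (h fun x hx y hy hxy => ?_)
  exact Finset.mem_erase.2 ⟨hA.color_ne ht hm (by omega) hx hy hxy, hK hx hy hxy⟩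

end MonochromaticStars

section TwoColors

variable {V C : Type*} {c : Sym2 V → C} {i r b : C} {t : ℕ} {A X : Finset V} {v : V}

lemma UsesColors.card_le_of_singleton (h : UsesColors c X {i}) (ht : 3 ≤ t)
    (hm : ¬ HasMonoCopy c (starPlus t)) : X.card ≤ t - 1 := by
  classical
  obtain rfl | ⟨v, hv⟩ := X.eq_empty_or_nonempty
  · simp
  have hstar : IsMonoStar c i v (X.erase v) := ⟨X.notMem_erase v, fun x hx =>
    Finset.mem_singleton.1 (h hv (Finset.mem_of_mem_erase hx) (Finset.ne_of_mem_erase hx).symm)⟩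
  have hcard : (X.erase v).card ≤ t - 2 := by
    refine hstar.card_le ht hm (h.mono (X.erase_subset v) fun _ => id) le_rfl fun h' => ?_
    rw [Finset.erase_singleton] at h'
    exact h'.card_le_one.trans (by omega)
  rw [Finset.card_erase_of_mem hv] at hcard
  omega

variable [DecidableEq C]

lemma card_le_card_filter_add_card_filter (h : ∀ x ∈ A, c s(v, x) = r ∨ c s(v, x) = b) :
    A.card ≤ ({x ∈ A | c s(v, x) = r} : Finset V).card +
      ({x ∈ A | c s(v, x) = b} : Finset V).card := by
  classical
  calc A.card = ({x ∈ A | c s(v, x) = r ∨ c s(v, x) = b} : Finset V).card := by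
        rw [Finset.filter_true_of_mem h]
    _ ≤ _ := by
        rw [Finset.filter_or]
        exact Finset.card_union_le _ _

lemma UsesColors.card_colorNeighbors_le [DecidableEq V] (h : UsesColors c X {r, b}) (ht : 3 ≤ t)
    (hm : ¬ HasMonoCopy c (starPlus t)) :
    ({x ∈ X.erase v | c s(v, x) = r} : Finset V).card ≤ t - 1 := by
  have hsub : {x ∈ X.erase v | c s(v, x) = r} ⊆ X :=
    (Finset.filter_subset _ _).trans (X.erase_subset v)
  refine (isMonoStar_filter r (X.notMem_erase v)).card_le ht hm (h.mono hsub fun _ => id)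
    (by omega) fun h' => UsesColors.card_le_of_singleton (i := b) (h'.mono subset_rfl ?_) ht hm
  intro i hi
  simp only [Finset.mem_erase, Finset.mem_insert, Finset.mem_singleton] at hi ⊢
  exact hi.2.resolve_left hi.1

lemma UsesColors.card_le_card_colorNeighbors [DecidableEq V] (h : UsesColors c X {r, b})
    (ht : 3 ≤ t) (hm : ¬ HasMonoCopy c (starPlus t)) (hv : v ∈ X) :
    X.card ≤ ({x ∈ X.erase v | c s(v, x) = r} : Finset V).card + t := by
  have hb : ({x ∈ X.erase v | c s(v, x) = b} : Finset V).card ≤ t - 1 :=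
    UsesColors.card_colorNeighbors_le (b := r) (Finset.pair_comm r b ▸ h) ht hm
  have hsplit := card_le_card_filter_add_card_filter (A := X.erase v) (v := v) fun x hx => by
    simpa only [Finset.mem_insert, Finset.mem_singleton] using
      h hv (Finset.mem_of_mem_erase hx) (Finset.ne_of_mem_erase hx).symm
  rw [Finset.card_erase_of_mem hv] at hsplit
  omega

-- With `2 t - 1` vertices all color degrees would be exactly `t - 1`. The `r`-neighbors of a vertex
-- `v` then span only the color `b`, so the `b`-neighborhood of one of them contains an edge of
-- color `b`.
lemma UsesColors.card_le_two_mul (h : UsesColors c X {r, b}) (ht : 4 ≤ t)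
    (hm : ¬ HasMonoCopy c (starPlus t)) : X.card ≤ 2 * (t - 1) := by
  classical
  by_contra! hlt
  have ht3 : 3 ≤ t := by omega
  have hr {v : V} (hv : v ∈ X) : t - 1 ≤ ({x ∈ X.erase v | c s(v, x) = r} : Finset V).card := by
    have := h.card_le_card_colorNeighbors ht3 hm hv
    omega
  have hb {v : V} (hv : v ∈ X) : t - 1 ≤ ({x ∈ X.erase v | c s(v, x) = b} : Finset V).card := by
    have := UsesColors.card_le_card_colorNeighbors (Finset.pair_comm r b ▸ h) ht3 hm hv
    omega
  obtain ⟨v, hv⟩ : X.Nonempty := Finset.card_pos.1 (by omega)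
  let N : Finset V := {x ∈ X.erase v | c s(v, x) = r}
  have hNX : N ⊆ X := (Finset.filter_subset _ _).trans (X.erase_subset v)
  have hNb {x y : V} (hx : x ∈ N) (hy : y ∈ N) (hxy : x ≠ y) : c s(x, y) = b := by
    have hne := (isMonoStar_filter r (X.notMem_erase v)).color_ne ht3 hm (hr hv) hx hy hxy
    have hmem : c s(x, y) ∈ ({r, b} : Finset C) := h (hNX hx) (hNX hy) hxy
    rw [Finset.mem_insert, Finset.mem_singleton] at hmem
    exact hmem.resolve_left hne
  have hN : 2 < N.card := lt_of_lt_of_le (by omega) (hr hv)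
  obtain ⟨u, x, y, hu, hx, hy, hux, huy, hxy⟩ := Finset.two_lt_card_iff.1 hN
  have hmem {z : V} (hz : z ∈ N) (huz : u ≠ z) : z ∈ {x ∈ X.erase u | c s(u, x) = b} :=
    Finset.mem_filter.2 ⟨Finset.mem_erase.2 ⟨huz.symm, hNX hz⟩, hNb hu hz huz⟩
  exact (isMonoStar_filter b (X.notMem_erase u)).color_ne ht3 hm (hb (hNX hu)) (hmem hx hux)
    (hmem hy huy) hxy (hNb hx hy hxy)

lemma UsesColors.card_le_max_of_pair (h : UsesColors c X {r, b}) (ht : 3 ≤ t)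
    (hm : ¬ HasMonoCopy c (starPlus t)) : X.card ≤ max (2 * (t - 1)) 5 := by
  classical
  obtain rfl | ht4 := ht.eq_or_lt
  · obtain rfl | ⟨v, hv⟩ := X.eq_empty_or_nonempty
    · simp
    have hdeg := h.card_colorNeighbors_le (v := v) le_rfl hm
    have hX := h.card_le_card_colorNeighbors le_rfl hm hv
    omega
  · exact (h.card_le_two_mul ht4 hm).trans (le_max_left _ _)

end TwoColors

section GallaiPartitions

variable {V C : Type*} {c : Sym2 V → C} {r b : C} {X : Finset V} {s : Setoid V}

/-- A Gallai partition of the vertex set `X`, into the classes of the equivalence relation `s`: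
there are at least two parts, all edges between different parts have color `r` or `b`, and all edges
between the same two parts have the same color. -/
structure IsGallaiPartition (c : Sym2 V → C) (X : Finset V) (r b : C) (s : Setoid V) : Prop where
  nontrivial : ∃ x ∈ X, ∃ y ∈ X, ¬ s x y
  cross : ∀ x ∈ X, ∀ y ∈ X, ¬ s x y → c s(x, y) = r ∨ c s(x, y) = b
  homogeneous : ∀ x ∈ X, ∀ x' ∈ X, ∀ y ∈ X, s x x' → ¬ s x y → c s(y, x) = c s(y, x')

lemma color_eq_of_not_hasRainbowTriangle (hr : ¬ HasRainbowTriangle c) {u v w : V} (huv : u ≠ v)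
    (huw : u ≠ w) (hvw : v ≠ w) (h₁ : c s(u, v) ≠ c s(u, w)) (h₂ : c s(u, v) ≠ c s(v, w)) :
    c s(u, w) = c s(v, w) :=
  by_contra fun h₃ => hr ⟨u, v, w, huv, huw, hvw, h₁, h₂, h₃⟩

-- The parts are the components of the graph formed by the edges of `X` colored neither `r` nor `b`.
lemma exists_isGallaiPartition_of_cut (hr : ¬ HasRainbowTriangle c) (Z : Set V)
    (hZ : ∃ x ∈ X, x ∈ Z) (hZ' : ∃ y ∈ X, y ∉ Z)
    (hcut : ∀ x ∈ X, ∀ y ∈ X, x ∈ Z → y ∉ Z → c s(x, y) = r ∨ c s(x, y) = b) :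
    ∃ s, IsGallaiPartition c X r b s := by
  let R (x y : V) : Prop := x ∈ X ∧ y ∈ X ∧ ¬ (c s(x, y) = r ∨ c s(x, y) = b)
  let s : Setoid V := Relation.EqvGen.setoid R
  have hsZ : s ≤ Setoid.ker (· ∈ Z) := by
    refine Setoid.eqvGen_le fun x y ⟨hx, hy, hxy⟩ => propext ⟨fun hxZ => ?_, fun hyZ => ?_⟩
    · exact by_contra fun hyZ => hxy (hcut x hx y hy hxZ hyZ)
    · exact by_contra fun hxZ => hxy (Sym2.eq_swap ▸ hcut y hy x hx hyZ hxZ)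
  have hcross {x y : V} (hx : x ∈ X) (hy : y ∈ X) (hxy : ¬ s x y) : c s(x, y) = r ∨ c s(x, y) = b :=
    by_contra fun h => hxy (.rel _ _ ⟨hx, hy, h⟩)
  have hhom {x x' y : V} (hy : y ∈ X) (h : s x x') : ¬ s x y → c s(y, x) = c s(y, x') := by
    induction h with
    | refl => exact fun _ => rfl
    | symm x x' hx ih => exact fun hxy => (ih fun h => hxy (s.trans (s.symm hx) h)).symm
    | trans x x' x'' hx _ ih ih' =>
      exact fun hxy => (ih hxy).trans (ih' fun h => hxy (s.trans hx h))
    | rel x x' hR =>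
      intro hxy
      have hxy' : ¬ s x' y := fun h => hxy (s.trans (.rel _ _ hR) h)
      by_cases hxx' : x = x'
      · rw [hxx']
      have hxy_cross := hcross hR.1 hy hxy
      have hxy'_cross := hcross hR.2.1 hy hxy'
      rw [Sym2.eq_swap, Sym2.eq_swap (a := y)]
      refine color_eq_of_not_hasRainbowTriangle hr hxx' ?_ ?_ (fun h => hR.2.2 (h ▸ hxy_cross))
        fun h => hR.2.2 (h ▸ hxy'_cross)
      · rintro rfl; exact hxy (s.refl _)
      · rintro rfl; exact hxy' (s.refl _)
  obtain ⟨⟨x, hx, hxZ⟩, ⟨y, hy, hyZ⟩⟩ := And.intro hZ hZ'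
  exact ⟨s, ⟨x, hx, y, hy, fun hxy => hyZ ((hsZ hxy).mp hxZ)⟩,
    fun _ hx _ hy => hcross hx hy, fun _ _ _ _ _ hy => hhom hy⟩

namespace IsGallaiPartition

lemma exists_not_rel (h : IsGallaiPartition c X r b s) (z : V) : ∃ u ∈ X, ¬ s z u := by
  obtain ⟨x, hx, y, hy, hxy⟩ := h.nontrivial
  by_cases hzx : s z x
  · exact ⟨y, hy, fun hzy => hxy (s.trans (s.symm hzx) hzy)⟩
  · exact ⟨x, hx, hzx⟩

section Extension

variable {v z u : V} (h : IsGallaiPartition c X r b s) (hr : ¬ HasRainbowTriangle c) (hv : v ∉ X)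
  (hlink : ∀ z ∈ X, ∃ z' ∈ X, s z z' ∧ ¬ (c s(v, z') = r ∨ c s(v, z') = b))
include h hr hv hlink

lemma color_eq_of_color_mem_pair (hz : z ∈ X) (hu : u ∈ X) (hzu : ¬ s z u)
    (hvz : c s(v, z) = r ∨ c s(v, z) = b) : c s(z, u) = c s(v, z) := by
  obtain ⟨u', hu', huu', hvu'⟩ := hlink u hu
  have hzu' : ¬ s z u' := fun h' => hzu (s.trans h' (s.symm huu'))
  have hcross := h.cross u' hu' z hz fun h' => hzu' (s.symm h')
  rw [h.homogeneous u hu u' hu' z hz huu' fun h' => hzu (s.symm h'), Sym2.eq_swap]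
  refine color_eq_of_not_hasRainbowTriangle hr (v := v) ?_ ?_ ?_ ?_ ?_
  · rintro rfl; exact hv hu'
  · rintro rfl; exact hzu' (s.refl _)
  · rintro rfl; exact hv hz
  · rw [Sym2.eq_swap]; exact fun h' => hvu' (h' ▸ hcross)
  · rw [Sym2.eq_swap]; exact fun h' => hvu' (h' ▸ hvz)

lemma color_eq_of_color_notMem_pair (hz : z ∈ X) (hu : u ∈ X)
    (hvz : ¬ (c s(v, z) = r ∨ c s(v, z) = b)) (hvu : ¬ (c s(v, u) = r ∨ c s(v, u) = b)) :
    c s(v, z) = c s(v, u) := by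
  have hdiff {z u : V} (hz : z ∈ X) (hu : u ∈ X) (hvz : ¬ (c s(v, z) = r ∨ c s(v, z) = b))
      (hvu : ¬ (c s(v, u) = r ∨ c s(v, u) = b)) (hzu : ¬ s z u) : c s(v, z) = c s(v, u) := by
    have hcross := h.cross z hz u hu hzu
    rw [Sym2.eq_swap (a := v) (b := z)] at hvz ⊢
    rw [Sym2.eq_swap (a := v) (b := u)] at hvu ⊢
    refine color_eq_of_not_hasRainbowTriangle hr ?_ ?_ ?_ (fun h' => hvz (h' ▸ hcross))
      fun h' => hvu (h' ▸ hcross)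
    · rintro rfl; exact hzu (s.refl _)
    · rintro rfl; exact hv hz
    · rintro rfl; exact hv hu
  by_cases hzu : s z u
  · obtain ⟨w, hw, hzw⟩ := h.exists_not_rel z
    obtain ⟨w', hw', hww', hvw'⟩ := hlink w hw
    have hzw' : ¬ s z w' := fun h' => hzw (s.trans h' (s.symm hww'))
    exact (hdiff hz hw' hvz hvw' hzw').trans
      (hdiff hu hw' hvu hvw' fun h' => hzw' (s.trans hzu h')).symm
  · exact hdiff hz hu hvz hvu hzu

-- An `r`-edge `v p` forces color `r` between the part of `p` and all other parts, and likewise for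
-- `b`, so `v` cannot meet both colors.
lemma color_eq_of_color_mem_pair_of_color_mem_pair (hz : z ∈ X) (hu : u ∈ X)
    (hvz : c s(v, z) = r ∨ c s(v, z) = b) (hvu : c s(v, u) = r ∨ c s(v, u) = b) :
    c s(v, z) = c s(v, u) := by
  by_cases hzu : s z u
  · obtain ⟨w, hw, hzw⟩ := h.exists_not_rel z
    rw [← h.color_eq_of_color_mem_pair hr hv hlink hz hw hzw hvz,
      ← h.color_eq_of_color_mem_pair hr hv hlink hu hw (fun h' => hzw (s.trans hzu h')) hvu,
      Sym2.eq_swap, Sym2.eq_swap (a := u)]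
    exact h.homogeneous z hz u hu w hw hzu hzw
  · rw [← h.color_eq_of_color_mem_pair hr hv hlink hz hu hzu hvz,
      ← h.color_eq_of_color_mem_pair hr hv hlink hu hz (fun h' => hzu (s.symm h')) hvu,
      Sym2.eq_swap]

lemma exists_two_colors : ∃ i j, ∀ z ∈ X, c s(v, z) = i ∨ c s(v, z) = j := by
  obtain ⟨x, hx, -⟩ := h.nontrivial
  obtain ⟨g, hg, -, hvg⟩ := hlink x hx
  by_cases hp : ∃ p ∈ X, c s(v, p) = r ∨ c s(v, p) = b
  · obtain ⟨p, hp, hvp⟩ := hp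
    refine ⟨c s(v, p), c s(v, g), fun z hz => ?_⟩
    by_cases hvz : c s(v, z) = r ∨ c s(v, z) = b
    · exact .inl (h.color_eq_of_color_mem_pair_of_color_mem_pair hr hv hlink hz hp hvz hvp)
    · exact .inr (h.color_eq_of_color_notMem_pair hr hv hlink hz hg hvz hvg)
  · push Not at hp
    refine ⟨c s(v, g), c s(v, g), fun z hz => .inl ?_⟩
    exact h.color_eq_of_color_notMem_pair hr hv hlink hz hg (not_or.2 (hp z hz)) hvg

end Extension

end IsGallaiPartition

theorem exists_isGallaiPartition (hr : ¬ HasRainbowTriangle c) (hX : X.Nontrivial) :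
    ∃ r b s, IsGallaiPartition c X r b s := by
  classical
  induction X using Finset.induction_on with
  | empty => simp at hX
  | insert v X hv ih =>
  have hX' : X.Nonempty := by
    rw [Finset.nonempty_iff_ne_empty]
    rintro rfl
    simp at hX
  by_cases hpair : ∃ i j, ∀ z ∈ X, c s(v, z) = i ∨ c s(v, z) = j
  · obtain ⟨i, j, hij⟩ := hpair
    obtain ⟨x, hx⟩ := hX'
    refine ⟨i, j, exists_isGallaiPartition_of_cut hr {v} ⟨v, Finset.mem_insert_self v X, rfl⟩
      ⟨x, Finset.mem_insert_of_mem hx, fun hxv => hv (hxv ▸ hx)⟩ ?_⟩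
    rintro x - y hy rfl hyv
    exact hij y (Finset.mem_of_mem_insert_of_ne hy hyv)
  · have hXnt : X.Nontrivial := by
      obtain ⟨x, rfl⟩ | hXnt := hX'.exists_eq_singleton_or_nontrivial
      · exact (hpair ⟨c s(v, x), c s(v, x), by simp⟩).elim
      · exact hXnt
    obtain ⟨r, b, s, hs⟩ := ih hXnt
    obtain ⟨z, hz, hzv⟩ : ∃ z ∈ X, ∀ z' ∈ X, s z z' → c s(v, z') = r ∨ c s(v, z') = b := by
      by_contra! hlink
      exact hpair (hs.exists_two_colors hr hv (by simpa only [not_or] using hlink))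
    refine ⟨r, b, exists_isGallaiPartition_of_cut hr {x | x ∈ X ∧ s z x}
      ⟨z, Finset.mem_insert_of_mem hz, hz, s.refl z⟩
      ⟨v, Finset.mem_insert_self v X, fun h => hv h.1⟩ ?_⟩
    rintro x - y hy ⟨hx, hzx⟩ hyZ
    obtain rfl | hy := Finset.mem_insert.1 hy
    · rw [Sym2.eq_swap]
      exact hzv x hx hzx
    · exact hs.cross x hx y hy fun hxy => hyZ ⟨hy, s.trans hzx hxy⟩

end GallaiPartitions

section UpperBound

variable {V C : Type*} {c : Sym2 V → C} {r b i : C} {t M : ℕ} {X : Finset V} {s : Setoid V}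
  {v : V}

namespace IsGallaiPartition

lemma isMonoStar_part [DecidableRel s] (h : IsGallaiPartition c X r b s) {p : V} (hv : v ∈ X)
    (hp : p ∈ X) (hvp : ¬ s v p) : IsMonoStar c (c s(v, p)) p {x ∈ X | s v x} := by
  refine ⟨fun hp' => hvp (Finset.mem_filter.1 hp').2, fun x hx => ?_⟩
  obtain ⟨hx, hvx⟩ := Finset.mem_filter.1 hx
  rw [← h.homogeneous v hv x hx p hp hvx hvp, Sym2.eq_swap]

lemma card_le_two_mul_of_color_eq [DecidableEq C] {K : Finset C}
    (h : IsGallaiPartition c X r b s) (ht : 3 ≤ t)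
    (hm : ¬ HasMonoCopy c (starPlus t)) (hK : UsesColors c X K) (htM : t - 2 ≤ M)
    (hM : ∀ A, UsesColors c A (K.erase i) → A.card ≤ M) (hv : v ∈ X)
    (hvi : ∀ u ∈ X, ¬ s v u → c s(v, u) = i) : X.card ≤ 2 * M := by
  classical
  have hstar {A : Finset V} {z : V} (hA : A ⊆ X) (hz : IsMonoStar c i z A) : A.card ≤ M :=
    hz.card_le ht hm (hK.mono hA fun _ => id) htM (hM A)
  obtain ⟨w, hw, hvw⟩ := h.exists_not_rel v
  have hpart : ({x ∈ X | s v x} : Finset V).card ≤ M :=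
    hstar (Finset.filter_subset _ _) (hvi w hw hvw ▸ h.isMonoStar_part hv hw hvw)
  have hrest : ({x ∈ X | ¬ s v x} : Finset V).card ≤ M :=
    hstar (Finset.filter_subset _ _) ⟨fun hv' => (Finset.mem_filter.1 hv').2 (s.refl v),
      fun x hx => hvi x (Finset.mem_filter.1 hx).1 (Finset.mem_filter.1 hx).2⟩
  have := Finset.card_filter_add_card_filter_not (s := X) fun x => s v x
  omega

lemma card_part_le [DecidableRel s] [DecidableEq C] {K : Finset C}
    (h : IsGallaiPartition c X r b s) (ht : 3 ≤ t)
    (hm : ¬ HasMonoCopy c (starPlus t)) (hK : UsesColors c X K) (htM : t - 2 ≤ M)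
    (hM : ∀ A, UsesColors c A ((K.erase r).erase b) → A.card ≤ M) (hv : v ∈ X)
    (hr : ∃ p ∈ X, ¬ s v p ∧ c s(v, p) = r) (hb : ∃ q ∈ X, ¬ s v q ∧ c s(v, q) = b) :
    ({x ∈ X | s v x} : Finset V).card ≤ M := by
  obtain ⟨⟨p, hp, hvp, rfl⟩, ⟨q, hq, hvq, rfl⟩⟩ := And.intro hr hb
  refine (h.isMonoStar_part hv hp hvp).card_le ht hm (hK.mono (Finset.filter_subset _ _)
    fun _ => id) htM fun hK' => ?_
  exact (h.isMonoStar_part hv hq hvq).card_le ht hm hK' htM (hM _)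

end IsGallaiPartition

section PartSizes

variable [DecidableRel s] (ht : 3 ≤ t) (hm : ¬ HasMonoCopy c (starPlus t)) (htM : t - 2 ≤ M)
  (hpart : ∀ v ∈ X, ({x ∈ X | s v x} : Finset V).card ≤ M)
include ht hm htM hpart

lemma card_le_two_mul_of_cross_color_eq (hX : ∀ x ∈ X, ∀ y ∈ X, ¬ s x y → c s(x, y) = i) :
    X.card ≤ 2 * M := by
  obtain rfl | ⟨v, hv⟩ := X.eq_empty_or_nonempty
  · simp
  have hsum := Finset.card_filter_add_card_filter_not (s := X) fun x => s v x
  have hpv := hpart v hv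
  suffices hrest : ({x ∈ X | ¬ s v x} : Finset V).card ≤ M by omega
  by_contra! hlt
  have hstar : IsMonoStar c i v {x ∈ X | ¬ s v x} :=
    ⟨fun hv' => (Finset.mem_filter.1 hv').2 (s.refl v),
      fun x hx => hX v hv x (Finset.mem_filter.1 hx).1 (Finset.mem_filter.1 hx).2⟩
  obtain ⟨z, hz⟩ : ({x ∈ X | ¬ s v x} : Finset V).Nonempty := Finset.card_pos.1 (by omega)
  have hzX := (Finset.mem_filter.1 hz).1
  have hsub : {x ∈ X | ¬ s v x} ⊆ {x ∈ X | s z x} := fun x hx => by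
    have hxX := (Finset.mem_filter.1 hx).1
    refine Finset.mem_filter.2 ⟨hxX, by_contra fun hzx => ?_⟩
    refine hstar.color_ne ht hm (by omega) hz hx ?_ (hX z hzX x hxX hzx)
    rintro rfl
    exact hzx (s.refl _)
  exact hlt.not_ge ((Finset.card_le_card hsub).trans (hpart z hzX))

lemma card_cross_colorNeighbors_le [DecidableEq C]
    (hX : ∀ x ∈ X, ∀ y ∈ X, ¬ s x y → c s(x, y) = r ∨ c s(x, y) = b) :
    ({x ∈ {x ∈ X | ¬ s v x} | c s(v, x) = r} : Finset V).card ≤ 2 * M := by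
  set Y : Finset V := {x ∈ {x ∈ X | ¬ s v x} | c s(v, x) = r}
  have hYX : Y ⊆ X := (Finset.filter_subset _ _).trans (Finset.filter_subset _ _)
  have hstar : IsMonoStar c r v Y :=
    isMonoStar_filter r fun hv => (Finset.mem_filter.1 hv).2 (s.refl v)
  obtain hlt | hge := lt_or_ge Y.card (t - 1)
  · omega
  refine card_le_two_mul_of_cross_color_eq (s := s) (i := b) ht hm htM (fun x hx => ?_)
    fun x hx y hy hxy => ?_
  · exact (Finset.card_le_card (Finset.filter_subset_filter _ hYX)).trans (hpart x (hYX hx))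
  · refine (hX x (hYX hx) y (hYX hy) hxy).resolve_left (hstar.color_ne ht hm hge hx hy ?_)
    rintro rfl
    exact hxy (s.refl _)

lemma IsGallaiPartition.card_le_five_mul (h : IsGallaiPartition c X r b s) : X.card ≤ 5 * M := by
  classical
  obtain ⟨v, hv, -⟩ := h.nontrivial
  have hsum := Finset.card_filter_add_card_filter_not (s := X) fun x => s v x
  have hpv := hpart v hv
  have hcross := card_le_card_filter_add_card_filter (A := {x ∈ X | ¬ s v x}) (v := v)
    fun x hx => h.cross v hv x (Finset.mem_filter.1 hx).1 (Finset.mem_filter.1 hx).2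
  have hr := card_cross_colorNeighbors_le (v := v) ht hm htM hpart h.cross
  have hb := card_cross_colorNeighbors_le (v := v) ht hm htM hpart
    fun x hx y hy hxy => (h.cross x hx y hy hxy).symm
  omega

end PartSizes

/-- The largest number of vertices of a complete graph whose edges can be colored with `k` colors
without a rainbow triangle or a monochromatic `S_t^+`, for `t ≥ 3`; with `k = 0` colors this is a
single vertex. For `k = 2` the value `5` comes from the pentagon and exceeds `2 * (t - 1)` only if
`t = 3`. -/
def starPlusExtremal (t : ℕ) : ℕ → ℕ
  | 0 => 1
  | 1 => t - 1
  | 2 => max (2 * (t - 1)) 5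
  | k + 3 => 5 * starPlusExtremal t (k + 1)

lemma starPlusExtremal_odd (t m : ℕ) : starPlusExtremal t (2 * m + 1) = (t - 1) * 5 ^ m := by
  induction m with
  | zero => rw [pow_zero, mul_one, starPlusExtremal]
  | succ m ih => rw [Nat.mul_succ, starPlusExtremal, ih, pow_succ]; ring

lemma sub_one_le_starPlusExtremal (t : ℕ) : ∀ k, t - 1 ≤ starPlusExtremal t (k + 1)
  | 0 => le_rfl
  | 1 => by rw [starPlusExtremal]; omega
  | k + 2 => by
    rw [starPlusExtremal]
    exact (sub_one_le_starPlusExtremal t k).trans (Nat.le_mul_of_pos_left _ (by norm_num))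

lemma two_mul_starPlusExtremal_le (ht : 3 ≤ t) :
    ∀ k, 2 * starPlusExtremal t (k + 2) ≤ 5 * starPlusExtremal t (k + 1)
  | 0 => by simp only [starPlusExtremal]; omega
  | 1 => by simp only [starPlusExtremal]; omega
  | k + 2 => by
    have := two_mul_starPlusExtremal_le ht k
    change 2 * (5 * starPlusExtremal t (k + 2)) ≤ 5 * (5 * starPlusExtremal t (k + 1))
    omega

lemma IsGallaiPartition.card_le_five_mul_starPlusExtremal {k : ℕ} {K : Finset C}
    (h : IsGallaiPartition c X r b s) (ht : 3 ≤ t) (hm : ¬ HasMonoCopy c (starPlus t))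
    (hK : UsesColors c X K) (hcard : K.card = k + 3)
    (ih : ∀ L ⊂ K, ∀ A, UsesColors c A L → A.card ≤ starPlusExtremal t L.card) :
    X.card ≤ 5 * starPlusExtremal t (k + 1) := by
  classical
  have hsub (j : ℕ) : t - 2 ≤ starPlusExtremal t (j + 1) :=
    (by omega : t - 2 ≤ t - 1).trans (sub_one_le_starPlusExtremal t j)
  have hmemK {v u : V} (hv : v ∈ X) (hu : u ∈ X) (hvu : ¬ s v u) : c s(v, u) ∈ K :=
    hK hv hu fun huv => hvu (huv ▸ s.refl v)
  by_cases hone : ∃ i, ∃ v ∈ X, ∀ u ∈ X, ¬ s v u → c s(v, u) = i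
  · obtain ⟨i, v, hv, hvi⟩ := hone
    obtain ⟨w, hw, hvw⟩ := h.exists_not_rel v
    have hiK : i ∈ K := hvi w hw hvw ▸ hmemK hv hw hvw
    have hcard_erase : (K.erase i).card = k + 2 := by
      rw [Finset.card_erase_of_mem hiK, hcard, Nat.add_succ_sub_one]
    refine le_trans ?_ (two_mul_starPlusExtremal_le ht k)
    refine h.card_le_two_mul_of_color_eq ht hm hK (hsub (k + 1)) (fun A hA => ?_) hv hvi
    exact hcard_erase ▸ ih _ (Finset.erase_ssubset hiK) A hA
  · push Not at hone
    refine h.card_le_five_mul ht hm (hsub k) fun v hv => ?_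
    obtain ⟨p, hp, hvp, hpb⟩ := hone b v hv
    obtain ⟨q, hq, hvq, hqr⟩ := hone r v hv
    have hpr : c s(v, p) = r := (h.cross v hv p hp hvp).resolve_right hpb
    have hqb : c s(v, q) = b := (h.cross v hv q hq hvq).resolve_left hqr
    have hrK : r ∈ K := hpr ▸ hmemK hv hp hvp
    have hbK : b ∈ K.erase r := Finset.mem_erase.2 ⟨hqb ▸ hqr, hqb ▸ hmemK hv hq hvq⟩
    have hcard_erase : ((K.erase r).erase b).card = k + 1 := by
      rw [Finset.card_erase_of_mem hbK, Finset.card_erase_of_mem hrK, hcard, Nat.add_succ_sub_one,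
        Nat.add_succ_sub_one]
    refine h.card_part_le ht hm hK (hsub k) (fun A hA => ?_) hv ⟨p, hp, hvp, hpr⟩ ⟨q, hq, hvq, hqb⟩
    exact hcard_erase ▸
      ih _ ((Finset.erase_subset b _).trans_ssubset (Finset.erase_ssubset hrK)) A hA

theorem UsesColors.card_le_starPlusExtremal {K : Finset C} (hK : UsesColors c X K) (ht : 3 ≤ t)
    (hr : ¬ HasRainbowTriangle c) (hm : ¬ HasMonoCopy c (starPlus t)) :
    X.card ≤ starPlusExtremal t K.card := by
  classical
  induction K using Finset.strongInduction generalizing X with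
  | H K ih =>
  match hcard : K.card with
  | 0 =>
    obtain rfl := Finset.card_eq_zero.1 hcard
    exact hK.card_le_one
  | 1 =>
    obtain ⟨i, rfl⟩ := Finset.card_eq_one.1 hcard
    exact hK.card_le_of_singleton ht hm
  | 2 =>
    obtain ⟨r, b, -, rfl⟩ := Finset.card_eq_two.1 hcard
    exact hK.card_le_max_of_pair ht hm
  | k + 3 =>
    rw [starPlusExtremal]
    obtain hX | hX := le_or_gt X.card 1
    · have := sub_one_le_starPlusExtremal t k
      omega
    · obtain ⟨r, b, s, hs⟩ := exists_isGallaiPartition hr (Finset.one_lt_card_iff_nontrivial.1 hX)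
      exact hs.card_le_five_mul_starPlusExtremal ht hm hK hcard fun L hL A hA => ih L hL hA

end UpperBound

section LowerBound

/-- The edge coloring `c` has neither a rainbow triangle nor a monochromatic copy of `H`. -/
def Avoids {V C α : Type*} (c : Sym2 V → C) (H : SimpleGraph α) : Prop :=
  ¬ HasRainbowTriangle c ∧ ¬ HasMonoCopy c H

/-- The coloring of the complete graph on `A × W` obtained from the coloring `d` on `A` by replacing
each vertex with a copy of the coloring `c` on `W`, the colors of `c` and `d` being kept apart. -/
def substColoring {A W C D : Type*} [DecidableEq A] (d : Sym2 A → D) (c : Sym2 W → C) :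
    Sym2 (A × W) → D ⊕ C :=
  fun e => if (e.map Prod.fst).IsDiag then .inr (c (e.map Prod.snd)) else .inl (d (e.map Prod.fst))

/-- The coloring of `K_5` by a `5`-cycle and its complement. -/
def pentagonColoring (e : Sym2 (Fin 5)) : Fin 2 :=
  if e ∈ (SimpleGraph.cycleGraph 5).edgeSet then 0 else 1

variable {V V' W A C C' D α β : Type*} {G : SimpleGraph α} {H : SimpleGraph β} {n k t : ℕ}

lemma HasCopyIn.of_isContained {c : Sym2 V → C} {i : C} (h : HasCopyIn c i H)
    (hGH : G.IsContained H) : HasCopyIn c i G := by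
  obtain ⟨f, hf, hfi⟩ := h
  obtain ⟨φ⟩ := hGH
  exact ⟨f ∘ φ, hf.comp φ.injective, fun a b hab => hfi _ _ (φ.toHom.map_adj hab)⟩

lemma Avoids.of_isContained {c : Sym2 V → C} (h : Avoids c G) (hGH : G.IsContained H) :
    Avoids c H :=
  ⟨h.1, fun ⟨i, hi⟩ => h.2 ⟨i, hi.of_isContained hGH⟩⟩

lemma Avoids.comp {c : Sym2 V → C} (h : Avoids c H) (f : V' ↪ V) (g : C ≃ C') :
    Avoids (fun e => g (c (e.map f))) H := by
  refine ⟨?_, ?_⟩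
  · rintro ⟨u, v, w, huv, huw, hvw, h₁, h₂, h₃⟩
    exact h.1 ⟨f u, f v, f w, f.injective.ne huv, f.injective.ne huw, f.injective.ne hvw,
      fun h' => h₁ (congrArg g h'), fun h' => h₂ (congrArg g h'), fun h' => h₃ (congrArg g h')⟩
  · rintro ⟨i, φ, hφ, hi⟩
    exact h.2 ⟨g.symm i, f ∘ φ, f.injective.comp hφ,
      fun a b hab => g.eq_symm_apply.2 (hi a b hab)⟩

lemma Avoids.exists_fin [Fintype V] [Fintype C] {c : Sym2 V → C} (h : Avoids c H)
    (hn : n ≤ Fintype.card V) (hk : Fintype.card C = k) :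
    ∃ c' : Sym2 (Fin n) → Fin k, Avoids c' H := by
  obtain ⟨f⟩ := Function.Embedding.nonempty_of_card_le (α := Fin n) (β := V) (by simpa using hn)
  exact ⟨_, h.comp f (Fintype.equivFinOfCardEq hk)⟩

lemma avoids_const [Fintype V] [Fintype α] (i : C) (h : Fintype.card V < Fintype.card α) :
    Avoids (fun _ : Sym2 V => i) G :=
  ⟨fun ⟨_, _, _, _, _, _, h₁, _⟩ => h₁ rfl,
    fun ⟨_, f, hf, _⟩ => h.not_ge (Fintype.card_le_of_injective f hf)⟩

lemma top_isContained_starPlus (ht : 3 ≤ t) :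
    (⊤ : SimpleGraph (Fin 3)).IsContained (starPlus t) := by
  refine ⟨⟨⟨Fin.castLE ht, fun {a b} hab => ?_⟩, Fin.castLE_injective ht⟩⟩
  rw [starPlus_adj]
  revert a b
  simp only [SimpleGraph.top_adj, Fin.val_castLE, ne_eq, Fin.castLE_inj]
  decide

lemma avoids_pentagonColoring : Avoids pentagonColoring (⊤ : SimpleGraph (Fin 3)) := by
  refine ⟨?_, ?_⟩
  · rintro ⟨u, v, w, -, -, -, h₁, h₂, h₃⟩
    omega
  · rintro ⟨i, f, hf, hi⟩
    have key : ∀ x y z : Fin 5, x ≠ y → x ≠ z → y ≠ z →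
        ¬ (pentagonColoring s(x, y) = pentagonColoring s(x, z) ∧
          pentagonColoring s(x, y) = pentagonColoring s(y, z)) := by
      decide
    refine key (f 0) (f 1) (f 2) (hf.ne (by decide)) (hf.ne (by decide)) (hf.ne (by decide)) ?_
    rw [hi 0 1 (by simp), hi 0 2 (by simp), hi 1 2 (by simp)]
    exact ⟨rfl, rfl⟩

section SubstColoring

variable [DecidableEq A] {d : Sym2 A → D} {c : Sym2 W → C} {p q : A × W}

lemma substColoring_of_fst_eq (h : p.1 = q.1) :
    substColoring d c s(p, q) = .inr (c s(p.2, q.2)) :=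
  if_pos h

lemma substColoring_of_fst_ne (h : p.1 ≠ q.1) :
    substColoring d c s(p, q) = .inl (d s(p.1, q.1)) :=
  if_neg h

lemma substColoring_eq_inl {i : D} :
    substColoring d c s(p, q) = .inl i ↔ p.1 ≠ q.1 ∧ d s(p.1, q.1) = i := by
  by_cases h : p.1 = q.1
  · simp [substColoring_of_fst_eq h, h]
  · simp [substColoring_of_fst_ne h, h]

lemma substColoring_eq_inr {i : C} :
    substColoring d c s(p, q) = .inr i ↔ p.1 = q.1 ∧ c s(p.2, q.2) = i := by
  by_cases h : p.1 = q.1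
  · simp [substColoring_of_fst_eq h, h]
  · simp [substColoring_of_fst_ne h, h]

lemma substColoring_congr_left {x : A × W} (hpq : p.1 = q.1) (hpx : p.1 ≠ x.1) :
    substColoring d c s(p, x) = substColoring d c s(q, x) := by
  rw [substColoring_of_fst_ne hpx, substColoring_of_fst_ne (hpq ▸ hpx), hpq]

lemma not_hasRainbowTriangle_substColoring (hd : ¬ HasRainbowTriangle d)
    (hc : ¬ HasRainbowTriangle c) : ¬ HasRainbowTriangle (substColoring d c) := by
  rintro ⟨u, v, w, huv, huw, hvw, h₁, h₂, h₃⟩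
  by_cases huv₁ : u.1 = v.1
  · by_cases huw₁ : u.1 = w.1
    · have hvw₁ : v.1 = w.1 := huv₁.symm.trans huw₁
      rw [substColoring_of_fst_eq huv₁, substColoring_of_fst_eq huw₁] at h₁
      rw [substColoring_of_fst_eq huv₁, substColoring_of_fst_eq hvw₁] at h₂
      rw [substColoring_of_fst_eq huw₁, substColoring_of_fst_eq hvw₁] at h₃
      exact hc ⟨u.2, v.2, w.2, fun h => huv (Prod.ext huv₁ h), fun h => huw (Prod.ext huw₁ h),
        fun h => hvw (Prod.ext hvw₁ h), ne_of_apply_ne _ h₁, ne_of_apply_ne _ h₂,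
        ne_of_apply_ne _ h₃⟩
    · exact h₃ (substColoring_congr_left huv₁ huw₁)
  by_cases huw₁ : u.1 = w.1
  · rw [Sym2.eq_swap (a := v)] at h₂
    exact h₂ (substColoring_congr_left huw₁ huv₁)
  by_cases hvw₁ : v.1 = w.1
  · rw [Sym2.eq_swap, Sym2.eq_swap (a := u)] at h₁
    exact h₁ (substColoring_congr_left hvw₁ (Ne.symm huv₁))
  · rw [substColoring_of_fst_ne huv₁, substColoring_of_fst_ne huw₁] at h₁
    rw [substColoring_of_fst_ne huv₁, substColoring_of_fst_ne hvw₁] at h₂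
    rw [substColoring_of_fst_ne huw₁, substColoring_of_fst_ne hvw₁] at h₃
    exact hd ⟨u.1, v.1, w.1, huv₁, huw₁, hvw₁, ne_of_apply_ne _ h₁, ne_of_apply_ne _ h₂,
      ne_of_apply_ne _ h₃⟩

lemma not_hasMonoCopy_substColoring (ht : 3 ≤ t)
    (hd : ¬ HasMonoCopy d (⊤ : SimpleGraph (Fin 3))) (hc : ¬ HasMonoCopy c (starPlus t)) :
    ¬ HasMonoCopy (substColoring d c) (starPlus t) := by
  rintro ⟨i | i, hi⟩
  · obtain ⟨f, -, hfi⟩ := hi.of_isContained (top_isContained_starPlus ht)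
    refine hd ⟨i, Prod.fst ∘ f, fun a b hab => ?_, fun a b hab => ?_⟩
    · by_contra hne
      exact (substColoring_eq_inl.1 (hfi a b hne)).1 hab
    · exact (substColoring_eq_inl.1 (hfi a b hab)).2
  · obtain ⟨f, hf, hfi⟩ := hi
    let o : Fin t := ⟨0, by omega⟩
    have hfst (a : Fin t) : (f o).1 = (f a).1 := by
      by_cases hoa : o = a
      · rw [hoa]
      · exact (substColoring_eq_inr.1 (hfi o a (starPlus_adj.2 ⟨hoa, .inl (.inl rfl)⟩))).1
    exact hc ⟨i, Prod.snd ∘ f,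
      fun a b hab => hf (Prod.ext ((hfst a).symm.trans (hfst b)) hab),
      fun a b hab => (substColoring_eq_inr.1 (hfi a b hab)).2⟩

lemma Avoids.substColoring (hd : Avoids d (⊤ : SimpleGraph (Fin 3)))
    (hc : Avoids c (starPlus t)) (ht : 3 ≤ t) :
    Avoids (substColoring d c) (starPlus t) :=
  ⟨not_hasRainbowTriangle_substColoring hd.1 hc.1, not_hasMonoCopy_substColoring ht hd.2 hc.2⟩

end SubstColoring

theorem exists_avoids_starPlus (ht : 3 ≤ t) :
    ∀ k, ∃ c : Sym2 (Fin (starPlusExtremal t (k + 1))) → Fin (k + 1), Avoids c (starPlus t)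
  | 0 => ⟨fun _ => 0, avoids_const 0 (by
      rw [Fintype.card_fin, Fintype.card_fin, starPlusExtremal]; omega)⟩
  | 1 => by
    obtain ⟨c, hc⟩ := exists_avoids_starPlus ht 0
    have hdouble : Avoids (fun _ : Sym2 (Fin 2) => (0 : Fin 1)) (⊤ : SimpleGraph (Fin 3)) :=
      avoids_const 0 (by simp)
    rw [starPlusExtremal]
    obtain h | h := le_total (2 * (t - 1)) 5
    · rw [max_eq_right h]
      exact ⟨_, avoids_pentagonColoring.of_isContained (top_isContained_starPlus ht)⟩
    · rw [max_eq_left h]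
      exact (hdouble.substColoring hc ht).exists_fin
        (by rw [Fintype.card_prod, Fintype.card_fin, Fintype.card_fin, starPlusExtremal]) (by simp)
  | k + 2 => by
    obtain ⟨c, hc⟩ := exists_avoids_starPlus ht k
    exact (avoids_pentagonColoring.substColoring hc ht).exists_fin
      (by simp [starPlusExtremal]) (by simp; omega)

end LowerBound

theorem hasRainbowTriangle_or_hasMonoCopy_starPlus {k t : ℕ} (ht : 3 ≤ t)
    (c : Sym2 (Fin (starPlusExtremal t k + 1)) → Fin k) :
    HasRainbowTriangle c ∨ HasMonoCopy c (starPlus t) := by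
  by_contra! h
  have hcolors : UsesColors c Finset.univ Finset.univ := fun _ _ _ _ _ => Finset.mem_univ _
  have hcard := hcolors.card_le_starPlusExtremal ht h.1 h.2
  simp only [Finset.card_univ, Fintype.card_fin] at hcard
  omega

theorem gallaiRamsey_starPlus_odd_general (k t : ℕ) (hk : 1 ≤ k) (ht : 3 ≤ t) :
    (∀ c : Sym2 (Fin (starPlusExtremal t k + 1)) → Fin k,
      HasRainbowTriangle c ∨ HasMonoCopy c (starPlus t)) ∧
    grK3 k (starPlus t) = starPlusExtremal t k + 1 := by
  have hupper := hasRainbowTriangle_or_hasMonoCopy_starPlus (k := k) ht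
  refine ⟨hupper, IsLeast.csInf_eq ⟨hupper, fun n hn => ?_⟩⟩
  by_contra! hlt
  obtain ⟨m, rfl⟩ := Nat.exists_eq_add_of_le' hk
  obtain ⟨c, hc⟩ := exists_avoids_starPlus ht m
  obtain ⟨c', hc'⟩ := hc.exists_fin (n := n) (k := m + 1)
    (by simpa only [Fintype.card_fin] using Nat.lt_succ_iff.1 hlt) (Fintype.card_fin _)
  exact (hn c').elim hc'.1 hc'.2

/-- For every odd `k ≥ 1` and `t ≥ 3`, every `k`-coloring of the edges of the complete
graph on `(t-1)·5^((k-1)/2) + 1` vertices contains a rainbow triangle or a monochromatic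
copy of `S_t^+`; with the matching lower bound,
`gr_k(K_3 : S_t^+) = (t-1)·5^((k-1)/2) + 1`. -/
theorem gallaiRamsey_starPlus_odd (k t : ℕ) (hk : 1 ≤ k) (hko : Odd k) (ht : 3 ≤ t) :
    (∀ c : Sym2 (Fin ((t - 1) * 5 ^ ((k - 1) / 2) + 1)) → Fin k,
      HasRainbowTriangle c ∨ HasMonoCopy c (starPlus t)) ∧
    grK3 k (starPlus t) = (t - 1) * 5 ^ ((k - 1) / 2) + 1 := by
  have hval : starPlusExtremal t k = (t - 1) * 5 ^ ((k - 1) / 2) := by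
    obtain ⟨m, rfl⟩ := hko
    rw [starPlusExtremal_odd, show (2 * m + 1 - 1) / 2 = m by omega]
  exact hval ▸ gallaiRamsey_starPlus_odd_general k t hk ht
end

section
/- For every integer t ≥ 4, every coloring of the edges of the complete graph on 2t − 1 vertices with two colors (red and blue) contains a monochromatic copy of P_t^+. -/
open SimpleGraph

/-!
Take a longest monochromatic copy of some `P_m^+`, say in colour `G`, and let `z` be the end of its
tail. By maximality `z` is joined in the other colour `Gᶜ` to every vertex outside the copy. If
there are more than `m` outside vertices, they do not form a clique of `G`, so two of them form a
triangle of `Gᶜ` with `z`. Now `z` is the common end of two tailed triangles, one in each colour,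
disjoint apart from `z`. As long as some vertex `w` is uncovered, `w` can be absorbed into this
configuration by moving the common end either to `w` or to its neighbour in one of the two tails.
Eventually all `n` vertices are covered, and the two lengths, at most `m` each, add up to `n + 1`.
Hence `n ≤ 2 * m` in every case, and `n ≥ 2 * t - 1` forces `m ≥ t`.
-/

variable {V : Type*} {G : SimpleGraph V} {x y z w : V} {l l₁ l₂ : List V} {a : ℕ}

theorem exists_notMem_of_length_lt_card [Fintype V] (hl : l.length < Fintype.card V) :
    ∃ w, w ∉ l := by
  classical
  obtain ⟨w, -, hw⟩ := Finset.exists_mem_notMem_of_card_lt_card (t := .univ)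
    (l.toFinset_card_le.trans_lt hl)
  exact ⟨w, by simpa using hw⟩

/-- The vertices of `l` span, in this order, a path of `G` whose last three vertices form a
triangle. This is a copy of `P_t^+` with `t = l.length`, listed from `v_t` (the head, where `cons`
can extend the tail) down to `v_1`. -/
structure IsTadpole (G : SimpleGraph V) (l : List V) : Prop where
  nodup : l.Nodup
  isChain : l.IsChain G.Adj
  exists_triangle : ∃ x y z, [x, y, z] <:+ l ∧ G.Adj x z

namespace IsTadpole

theorem triangle (hxy : G.Adj x y) (hyz : G.Adj y z) (hxz : G.Adj x z) :
    IsTadpole G [x, y, z] where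
  nodup := by simp [hxy.ne, hyz.ne, hxz.ne]
  isChain := by simp [hxy, hyz]
  exists_triangle := ⟨x, y, z, List.suffix_rfl, hxz⟩

theorem cons (h : IsTadpole G (y :: l)) (hxy : G.Adj x y) (hx : x ∉ y :: l) :
    IsTadpole G (x :: y :: l) where
  nodup := h.nodup.cons hx
  isChain := h.isChain.cons_cons hxy
  exists_triangle :=
    let ⟨u, v, w, hs, huw⟩ := h.exists_triangle
    ⟨u, v, w, hs.trans (List.suffix_cons x _), huw⟩

theorem three_le_length (h : IsTadpole G l) : 3 ≤ l.length :=
  let ⟨_, _, _, hs, _⟩ := h.exists_triangle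
  hs.length_le

theorem of_cons (h : IsTadpole G (x :: l)) (hl : 3 ≤ l.length) : IsTadpole G l where
  nodup := h.nodup.of_cons
  isChain := h.isChain.tail
  exists_triangle := by
    obtain ⟨u, v, w, hs, huw⟩ := h.exists_triangle
    rcases List.suffix_cons_iff.1 hs with heq | hs
    · have hlen : 3 = l.length + 1 := by simpa using congrArg List.length heq
      omega
    · exact ⟨u, v, w, hs, huw⟩

theorem of_isClique {s : Finset V} (hs : G.IsClique s) (h3 : 3 ≤ s.card) :
    IsTadpole G s.toList := by
  have hpair : s.toList.Pairwise G.Adj :=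
    s.nodup_toList.pairwise_of_set_pairwise (by simpa using hs)
  have hsuff := List.drop_suffix (s.card - 3) s.toList
  obtain ⟨x, y, z, hxyz⟩ : ∃ x y z, s.toList.drop (s.card - 3) = [x, y, z] :=
    List.length_eq_three.1 (by simp; omega)
  rw [hxyz] at hsuff
  have hxz : G.Adj x z := List.rel_of_pairwise_cons (hpair.sublist hsuff.sublist) (by simp)
  exact ⟨s.nodup_toList, hpair.isChain, x, y, z, hsuff, hxz⟩

theorem pathPlus_isContained {t : ℕ} (h : IsTadpole G l) (ht : t ≤ l.length) : pathPlus t ⊑ G := by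
  obtain ⟨x, y, z, ⟨l', rfl⟩, hxz⟩ := h.exists_triangle
  set r := (l' ++ [x, y, z]).reverse with hr
  have hlen : t ≤ r.length := by simpa [r] using ht
  have hchain : r.IsChain G.Adj := by
    simpa only [hr, List.isChain_reverse, G.adj_comm] using h.isChain
  have hadj (i j : Fin t) (hij : j.val = i.val + 1 ∨ (i.val = 0 ∧ j.val = 2)) :
      G.Adj r[i] r[j] := by
    rcases hij with hij | ⟨hi, hj⟩
    · simpa [hij] using hchain.getElem i (by omega)
    · simpa [hr, hi, hj] using hxz.symm
  refine ⟨⟨⟨fun i => r[i], fun {i j} hij => ?_⟩, fun i j hij => ?_⟩⟩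
  · exact hij.2.elim (hadj i j) fun hji => (hadj j i hji).symm
  · exact Fin.ext ((List.nodup_reverse.2 h.nodup).getElem_inj_iff.1 hij)

end IsTadpole

/-- Two tadpoles, one in `G` and one in `Gᶜ`, that share the end `z` of their tails and are
otherwise disjoint. -/
structure IsTadpolePair (G : SimpleGraph V) (z : V) (l₁ l₂ : List V) : Prop where
  left : IsTadpole G (z :: l₁)
  right : IsTadpole Gᶜ (z :: l₂)
  disjoint : l₁.Disjoint l₂

namespace IsTadpolePair

theorem symm (h : IsTadpolePair G z l₁ l₂) : IsTadpolePair Gᶜ z l₂ l₁ :=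
  ⟨h.right, by simpa using h.left, h.disjoint.symm⟩

theorem exists_extension_of_adj (h : IsTadpolePair G z l₁ l₂) (hl₂ : 3 ≤ l₂.length)
    (hw : w ∉ z :: (l₁ ++ l₂)) (hwz : G.Adj w z) :
    ∃ z' l₁' l₂', IsTadpolePair G z' l₁' l₂' ∧
      l₁'.length + l₂'.length = l₁.length + l₂.length + 1 := by
  obtain ⟨hleft, hright, hdisj⟩ := h
  have hleft' : IsTadpole G (w :: z :: l₁) := hleft.cons hwz (by grind)
  obtain _ | ⟨y, l⟩ := l₂
  · simp at hl₂
  have hright' : IsTadpole Gᶜ (y :: l) := hright.of_cons hl₂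
  have hnodup : (z :: y :: l).Nodup := hright.nodup
  by_cases hwy : G.Adj w y
  · refine ⟨y, w :: z :: l₁, l, ⟨hleft'.cons hwy.symm ?_, hright', ?_⟩, ?_⟩ <;>
      grind [List.Disjoint]
  · refine ⟨w, z :: l₁, y :: l, ⟨hleft', hright'.cons ⟨?_, hwy⟩ ?_, ?_⟩, ?_⟩ <;>
      grind [List.Disjoint]

theorem exists_extension (h : IsTadpolePair G z l₁ l₂)
    (hmax : ∀ l, IsTadpole G l ∨ IsTadpole Gᶜ l → l.length ≤ a)
    (hlen : a < l₁.length + l₂.length) (hw : w ∉ z :: (l₁ ++ l₂)) :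
    ∃ z' l₁' l₂', IsTadpolePair G z' l₁' l₂' ∧
      l₁'.length + l₂'.length = l₁.length + l₂.length + 1 := by
  by_cases hwz : G.Adj w z
  · have hl₁ : l₁.length + 1 < a := by simpa using hmax _ (.inl (h.left.cons hwz (by grind)))
    exact h.exists_extension_of_adj (by omega) hw hwz
  · replace hwz : Gᶜ.Adj w z := ⟨by grind, hwz⟩
    have hl₂ : l₂.length + 1 < a := by simpa using hmax _ (.inr (h.right.cons hwz (by grind)))
    obtain ⟨z', l₂', l₁', h', hlen'⟩ :=
      h.symm.exists_extension_of_adj (by omega) (by grind) hwz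
    exact ⟨z', l₁', l₂', by simpa using h'.symm, by omega⟩

theorem nodup (h : IsTadpolePair G z l₁ l₂) : (z :: (l₁ ++ l₂)).Nodup := by
  have hleft := h.left.nodup
  have hright := h.right.nodup
  grind [List.nodup_append', h.disjoint]

theorem exists_spanning [Fintype V] (h : IsTadpolePair G z l₁ l₂)
    (hmax : ∀ l, IsTadpole G l ∨ IsTadpole Gᶜ l → l.length ≤ a)
    (hlen : a < l₁.length + l₂.length) :
    ∃ z' l₁' l₂', IsTadpolePair G z' l₁' l₂' ∧
      l₁'.length + l₂'.length + 1 = Fintype.card V := by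
  have exists_of_le (k : ℕ) (hk : l₁.length + l₂.length ≤ k) : k + 1 ≤ Fintype.card V →
      ∃ z' l₁' l₂', IsTadpolePair G z' l₁' l₂' ∧ l₁'.length + l₂'.length = k := by
    induction k, hk using Nat.le_induction with
    | base => exact fun _ => ⟨z, l₁, l₂, h, rfl⟩
    | succ k hk ih =>
      intro hcard
      obtain ⟨z', l₁', l₂', h', rfl⟩ := ih (by omega)
      obtain ⟨w, hw⟩ := exists_notMem_of_length_lt_card (l := z' :: (l₁' ++ l₂')) (by grind)
      exact h'.exists_extension hmax (by omega) hw
  have hcard : l₁.length + l₂.length + 1 ≤ Fintype.card V := by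
    simpa using h.nodup.length_le_card
  obtain ⟨z', l₁', l₂', h', hlen'⟩ := exists_of_le (Fintype.card V - 1) (by omega) (by omega)
  exact ⟨z', l₁', l₂', h', by omega⟩

end IsTadpolePair

theorem exists_isTadpole_or_compl [Fintype V] (G : SimpleGraph V) (hV : 6 ≤ Fintype.card V) :
    ∃ l, IsTadpole G l ∨ IsTadpole Gᶜ l := by
  classical
  have of_degree (H : SimpleGraph V) (v : V) (hv : 3 ≤ H.degree v) :
      ∃ l, IsTadpole H l ∨ IsTadpole Hᶜ l := by
    by_cases hfree : H.CliqueFree 3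
    · have hclique : Hᶜ.IsClique (H.neighborFinset v) := by
        simpa using isIndepSet_neighborSet_of_triangleFree H hfree v
      exact ⟨_, .inr (.of_isClique hclique hv)⟩
    · obtain ⟨s, hs⟩ : ∃ s, H.IsNClique 3 s := by simpa [CliqueFree] using hfree
      exact ⟨_, .inl (.of_isClique hs.isClique hs.card_eq.ge)⟩
  obtain ⟨v⟩ : Nonempty V := Fintype.card_pos_iff.1 (by omega)
  rcases le_or_gt 3 (G.degree v) with hv | hv
  · exact of_degree G v hv
  · simpa [or_comm] using of_degree Gᶜ v (by rw [degree_compl]; omega)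

namespace IsTadpole

variable [Fintype V]

theorem exists_isTadpolePair_of_forall_length_le (h : IsTadpole G (z :: l))
    (hmax : ∀ l', IsTadpole G l' → l'.length ≤ (z :: l).length)
    (hV : 2 * (z :: l).length < Fintype.card V) :
    ∃ x y, IsTadpolePair G z l [x, y] := by
  classical
  let s := (z :: l).toFinsetᶜ
  have hmem {w} : w ∈ s ↔ w ∉ z :: l := by simp [s]
  have hcard : (z :: l).length < s.card := by
    rw [Finset.card_compl, List.toFinset_card_of_nodup h.nodup]
    omega
  have hs : ¬ G.IsClique s := fun hs => by
    have hlong := hmax _ (.of_isClique hs (by grind [h.three_le_length]))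
    grind [Finset.length_toList]
  have hz {w} (hw : w ∈ s) : Gᶜ.Adj z w := by
    refine ⟨by grind, fun hzw => ?_⟩
    have hlong := hmax _ (h.cons hzw.symm (hmem.1 hw))
    simp at hlong
  obtain ⟨x, hx, y, hy, hxy, hnadj⟩ : ∃ x ∈ s, ∃ y ∈ s, x ≠ y ∧ ¬ G.Adj x y := by
    simpa [IsClique, Set.Pairwise] using hs
  have htriangle : IsTadpole Gᶜ [z, x, y] := .triangle (hz hx) ⟨hxy, hnadj⟩ (hz hy)
  exact ⟨x, y, h, htriangle, by grind [List.Disjoint]⟩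

theorem card_le_two_mul_length (h : IsTadpole G l)
    (hmax : ∀ l', IsTadpole G l' ∨ IsTadpole Gᶜ l' → l'.length ≤ l.length) :
    Fintype.card V ≤ 2 * l.length := by
  by_contra! hV
  obtain ⟨z, l, rfl⟩ := List.exists_cons_of_length_pos (by grind [h.three_le_length] : 0 < l.length)
  obtain ⟨x, y, hpair⟩ :=
    h.exists_isTadpolePair_of_forall_length_le (fun l' hl' => hmax l' (.inl hl')) hV
  obtain ⟨z', l₁, l₂, hspan, hcard⟩ := hpair.exists_spanning hmax (by simp)
  have h₁ := hmax _ (.inl hspan.left)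
  have h₂ := hmax _ (.inr hspan.right)
  simp only [List.length_cons] at h₁ h₂ hV
  omega

end IsTadpole

theorem exists_isTadpole_or_compl_card_le [Fintype V] (G : SimpleGraph V)
    (hV : 6 ≤ Fintype.card V) :
    ∃ l, (IsTadpole G l ∨ IsTadpole Gᶜ l) ∧ Fintype.card V ≤ 2 * l.length := by
  have hfin : {l | IsTadpole G l ∨ IsTadpole Gᶜ l}.Finite :=
    (List.finite_length_le V (Fintype.card V)).subset fun l hl =>
      hl.elim (·.nodup.length_le_card) (·.nodup.length_le_card)
  obtain ⟨l, hl, hmax⟩ :=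
    Set.exists_max_image _ List.length hfin (exists_isTadpole_or_compl G hV)
  refine ⟨l, hl, ?_⟩
  rcases hl with hl | hl
  · exact hl.card_le_two_mul_length hmax
  · exact hl.card_le_two_mul_length (by simpa [or_comm] using hmax)

theorem hasMonoCopy_of_forall_isContained {α : Type*} {H : SimpleGraph α}
    (h : ∀ G : SimpleGraph V, H ⊑ G ∨ H ⊑ Gᶜ) (c : Sym2 V → Fin 2) : HasMonoCopy c H := by
  rcases h (fromEdgeSet (c ⁻¹' {0})) with ⟨⟨f⟩⟩ | ⟨⟨f⟩⟩
  · exact ⟨0, f, f.injective, fun a b hab => ((fromEdgeSet_adj _).1 (f.toHom.map_adj hab)).1⟩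
  · refine ⟨1, f, f.injective, fun a b hab => ?_⟩
    have hadj := f.toHom.map_adj hab
    exact Fin.eq_one_of_ne_zero _ fun h0 => hadj.2 ((fromEdgeSet_adj _).2 ⟨h0, hadj.1⟩)

theorem ramsey_pathPlus_upper_general [Fintype V] {t : ℕ} (ht : 4 ≤ t)
    (hV : 2 * t - 1 ≤ Fintype.card V) (G : SimpleGraph V) : pathPlus t ⊑ G ∨ pathPlus t ⊑ Gᶜ := by
  obtain ⟨l, hl, hcard⟩ := exists_isTadpole_or_compl_card_le G (by omega)
  have hlen : t ≤ l.length := by omega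
  exact hl.imp (·.pathPlus_isContained hlen) (·.pathPlus_isContained hlen)

/-- For every `t ≥ 4`, every 2-coloring of the edges of the complete graph on
`2t - 1` vertices contains a monochromatic copy of `P_t^+`. -/
theorem ramsey_pathPlus_upper (t : ℕ) (ht : 4 ≤ t)
    (c : Sym2 (Fin (2 * t - 1)) → Fin 2) :
    HasMonoCopy c (pathPlus t) :=
  hasMonoCopy_of_forall_isContained (ramsey_pathPlus_upper_general ht (by simp)) c
end

section
/- For all integers s and t with t ≥ s ≥ 4, every coloring of the edges of the complete graph on 2t − 1 vertices with two colors (red and blue) contains either a red copy of P_s^+ or a blue copy of P_t^+; that is, R(P_s^+, P_t^+) ≤ 2t − 1, and together with the lower-bound construction, R(P_s^+, P_t^+) = 2t − 1. -/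
open SimpleGraph

/-!
Writing `G` for the red graph, the upper bound asks for `P_t^+` in `G` or in `Gᶜ`. Induct on `t`,
starting from `R(K₃, K₃) ≤ 6`. Suppose that `G` contains `P_t^+`, with triangle vertices `a`, `b`
at the start and last vertex `x`, but does not contain `P_{t+1}^+`, and let `U` be the set of
vertices outside this copy. Every vertex of `U` is then blue to `x` and blue to `a` or to `b`, since
otherwise the copy could be extended at one of its ends. For consecutive path vertices `q`, `q'`
past `b`, any two vertices of `U` not joined by a blue edge have `q` or `q'` as a common blue
neighbor, since otherwise one or both of them could be inserted between `q` and `q'`. As `U` is not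
a red clique, it has a blue edge `u₁u₂`. The triangle `u₁u₂x`, followed by a blue path threading the
rest of `U` through the path vertices and ending at `a` or `b`, contains a blue `P_{t+1}^+`.

For the lower bound, two blue cliques of order `t - 1` with only red edges between them contain no
red triangle and no blue connected graph on `t` vertices.
-/

section Coloring

variable {V C α β : Type*}

/-- The graph formed by the edges of color `i` in the edge-coloring `c`. -/
def colorGraph (c : Sym2 V → C) (i : C) : SimpleGraph V :=
  fromEdgeSet (c ⁻¹' {i})

theorem colorGraph_adj {c : Sym2 V → C} {i : C} {v w : V} :
    (colorGraph c i).Adj v w ↔ c s(v, w) = i ∧ v ≠ w :=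
  fromEdgeSet_adj _

theorem hasCopyIn_iff_isContained {c : Sym2 V → C} {i : C} {H : SimpleGraph α} :
    HasCopyIn c i H ↔ H ⊑ colorGraph c i := by
  constructor
  · rintro ⟨f, hf, hadj⟩
    exact ⟨⟨⟨f, fun h => colorGraph_adj.2 ⟨hadj _ _ h, hf.ne h.ne⟩⟩, hf⟩⟩
  · rintro ⟨f⟩
    exact ⟨f, f.injective, fun _ _ h => (colorGraph_adj.1 (f.toHom.map_adj h)).1⟩

theorem colorGraph_one (c : Sym2 V → Fin 2) : colorGraph c 1 = (colorGraph c 0)ᶜ := by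
  ext v w
  rw [compl_adj, colorGraph_adj, colorGraph_adj]
  have : c s(v, w) = 1 ↔ c s(v, w) ≠ 0 := by omega
  tauto

theorem exists_colorGraph_zero_eq (G : SimpleGraph V) :
    ∃ c : Sym2 V → Fin 2, colorGraph c 0 = G := by
  classical
  refine ⟨fun e => if e ∈ G.edgeSet then 0 else 1, ?_⟩
  ext v w
  simpa [colorGraph_adj] using Adj.ne

theorem forall_hasCopyIn_or_iff {F : SimpleGraph α} {H : SimpleGraph β} :
    (∀ c : Sym2 V → Fin 2, HasCopyIn c 0 F ∨ HasCopyIn c 1 H) ↔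
      ∀ G : SimpleGraph V, F ⊑ G ∨ H ⊑ Gᶜ := by
  simp only [hasCopyIn_iff_isContained, colorGraph_one]
  refine ⟨fun h G => ?_, fun h c => h _⟩
  obtain ⟨c, rfl⟩ := exists_colorGraph_zero_eq G
  exact h c

theorem apply_eq_of_preconnected {H : SimpleGraph β} (hH : H.Preconnected) {f : β → α}
    (hf : ∀ x y, H.Adj x y → f x = f y) (x y : β) : f x = f y := by
  obtain ⟨p⟩ := hH x y
  induction p with
  | nil => rfl
  | cons h _ ih => exact (hf _ _ h).trans ih

/-- The Chvátal–Harary lower bound: the extremal graph is complete `k`-partite with parts of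
order at most `|H| - 1`. -/
theorem mul_card_sub_one_lt_card [Fintype V] [Fintype β] {F : SimpleGraph α} {H : SimpleGraph β}
    {k : ℕ} (hF : ¬ F.Colorable k) (hH : H.Connected) (h : ∀ G : SimpleGraph V, F ⊑ G ∨ H ⊑ Gᶜ) :
    k * (Fintype.card β - 1) < Fintype.card V := by
  by_contra! hcard
  obtain ⟨e⟩ : Nonempty (V ↪ Fin k × Fin (Fintype.card β - 1)) :=
    Function.Embedding.nonempty_of_card_le (by simpa using hcard)
  rcases h ((⊤ : SimpleGraph (Fin k)).comap fun v => (e v).1) with ⟨⟨f⟩⟩ | ⟨⟨f⟩⟩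
  · exact hF ⟨Coloring.mk (fun x => (e (f x)).1) fun h => f.toHom.map_adj h⟩
  · have hconst (x y : β) : (e (f x)).1 = (e (f y)).1 :=
      apply_eq_of_preconnected hH.preconnected (f := fun x => (e (f x)).1)
        (fun x y h => by simpa using ((compl_adj _ _ _).1 (f.toHom.map_adj h)).2) x y
    have hinj : Function.Injective fun x => (e (f x)).2 := fun x y h =>
      f.injective (e.injective (Prod.ext (hconst x y) h))
    have hle := Fintype.card_le_of_injective _ hinj
    have hpos := Fintype.card_pos_iff.2 hH.nonempty
    rw [Fintype.card_fin] at hle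
    omega

end Coloring

section Clique

variable {V : Type*} {G : SimpleGraph V} {n : ℕ}

theorem isContained_of_not_cliqueFree (h : ¬ G.CliqueFree n) (H : SimpleGraph (Fin n)) : H ⊑ G :=
  ((not_cliqueFree_iff_top_isContained n).1 h).mono_left le_top

theorem not_cliqueFree_of_isClique {U : Finset V} (hU : G.IsClique U) (hn : n ≤ U.card) :
    ¬ G.CliqueFree n :=
  fun h => (h.mono hn) U ⟨hU, rfl⟩

theorem not_cliqueFree_three_or_compl_of_three_le_degree [Fintype V] [DecidableRel G.Adj] {v : V}
    (hv : 3 ≤ G.degree v) : ¬ G.CliqueFree 3 ∨ ¬ Gᶜ.CliqueFree 3 := by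
  refine or_iff_not_imp_left.2 fun hG => ?_
  have hN : Gᶜ.IsClique (G.neighborFinset v) := by
    rw [coe_neighborFinset, isClique_compl]
    exact isIndepSet_neighborSet_of_triangleFree G (not_not.1 hG) v
  exact not_cliqueFree_of_isClique hN hv

theorem not_cliqueFree_three_or_compl [Fintype V] (hV : 6 ≤ Fintype.card V) :
    ¬ G.CliqueFree 3 ∨ ¬ Gᶜ.CliqueFree 3 := by
  classical
  obtain ⟨v⟩ : Nonempty V := Fintype.card_pos_iff.1 (by omega)
  have hdeg := G.degree_compl (v := v)
  rcases le_or_gt 3 (G.degree v) with h | h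
  · exact not_cliqueFree_three_or_compl_of_three_le_degree h
  · have := not_cliqueFree_three_or_compl_of_three_le_degree (G := Gᶜ) (v := v) (by omega)
    rwa [compl_compl, or_comm] at this

end Clique

section PathPlus

theorem pathGraph_le_pathPlus (t : ℕ) : pathGraph t ≤ pathPlus t := by
  intro i j h
  have := pathGraph_adj.1 h
  exact (fromRel_adj _ _ _).2 ⟨h.ne, by omega⟩

theorem pathPlus_connected {t : ℕ} (ht : 0 < t) : (pathPlus t).Connected := by
  obtain ⟨n, rfl⟩ := Nat.exists_eq_add_of_le' ht
  exact (pathGraph_connected n).mono (pathGraph_le_pathPlus _)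

theorem pathPlus_isContained_pathPlus {s t : ℕ} (hst : s ≤ t) : pathPlus s ⊑ pathPlus t := by
  refine ⟨⟨⟨Fin.castLE hst, ?_⟩, Fin.castLE_injective hst⟩⟩
  intro i j h
  simpa [pathPlus, fromRel_adj] using h

theorem pathPlus_three : pathPlus 3 = ⊤ := by
  ext i j
  fin_cases i <;> fin_cases j <;> simp [pathPlus]

theorem pathPlus_not_colorable_two {t : ℕ} (ht : 3 ≤ t) : ¬ (pathPlus t).Colorable 2 := by
  intro h
  have htop : completeGraph (Fin 3) ⊑ pathPlus t :=
    (pathPlus_isContained_pathPlus ht).mono_left pathPlus_three.ge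
  exact (not_cliqueFree_iff_top_isContained 3).2 htop (h.cliqueFree (by norm_num))

end PathPlus

/-- `a, b, l` lists the vertices of a copy of `P_t^+` in `G`, where `t = l.length + 2`: a path
`b :: l` such that `a` is adjacent to its first two vertices. -/
structure IsTrianglePath {V : Type*} (G : SimpleGraph V) (a b : V) (l : List V) : Prop where
  nodup : (a :: b :: l).Nodup
  adj : G.Adj a b
  isChain_left : (a :: l).IsChain G.Adj
  isChain_right : (b :: l).IsChain G.Adj

section TrianglePath

variable {V : Type*} {G : SimpleGraph V}

theorem IsTrianglePath.isContained {a b : V} {l : List V} {t : ℕ} (h : IsTrianglePath G a b l)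
    (ht : t ≤ l.length + 2) : pathPlus t ⊑ G := by
  refine (pathPlus_isContained_pathPlus ht).trans ?_
  let f : Fin (l.length + 2) → V := (a :: b :: l).get
  have hf : Function.Injective f := List.nodup_iff_injective_get.1 h.nodup
  have hadj : ∀ i j : Fin (l.length + 2), j.val = i.val + 1 ∨ (i.val = 0 ∧ j.val = 2) →
      G.Adj (f i) (f j) := by
    rintro ⟨i, hi⟩ ⟨j, hj⟩ (hij | ⟨hi0, hj2⟩)
    · obtain rfl : j = i + 1 := hij
      exact List.isChain_iff_getElem.1 (List.isChain_cons_cons.2 ⟨h.adj, h.isChain_right⟩) i hj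
    · obtain rfl : i = 0 := hi0
      obtain rfl : j = 2 := hj2
      exact List.isChain_iff_getElem.1 h.isChain_left 0 (by simpa using hj)
  refine ⟨⟨⟨f, ?_⟩, hf⟩⟩
  intro i j hij
  rcases ((fromRel_adj _ _ _).1 hij).2 with h | h
  · exact hadj i j h
  · exact (hadj j i h).symm

theorem exists_isTrianglePath_of_isContained {n : ℕ} (h : pathPlus (n + 2) ⊑ G) :
    ∃ a b l, IsTrianglePath G a b l ∧ l.length = n := by
  obtain ⟨f⟩ := h
  have hadj (i j : Fin (n + 2)) (hij : j.val = i.val + 1 ∨ (i.val = 0 ∧ j.val = 2)) :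
      G.Adj (f i) (f j) :=
    f.toHom.map_adj ((fromRel_adj _ _ _).2 ⟨by omega, Or.inl hij⟩)
  let l := List.ofFn fun i : Fin n => f i.succ.succ
  have hofFn : List.ofFn f = f 0 :: f 1 :: l := by simp [List.ofFn_succ, l]
  have hnodup : (f 0 :: f 1 :: l).Nodup := hofFn ▸ List.nodup_ofFn.2 f.injective
  have hchain : (f 0 :: f 1 :: l).IsChain G.Adj :=
    hofFn ▸ List.isChain_ofFn.2 fun i hi => hadj ⟨i, by omega⟩ ⟨i + 1, hi⟩ (Or.inl rfl)
  have hleft : (f 0 :: l).IsChain G.Adj := by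
    refine List.isChain_cons.2 ⟨fun y hy => ?_, hchain.tail.tail⟩
    obtain _ | m := n
    · simp [l] at hy
    · obtain rfl : f 2 = y := by simpa [l, List.ofFn_succ] using hy
      exact hadj 0 2 (Or.inr ⟨rfl, rfl⟩)
  exact ⟨f 0, f 1, l, ⟨hnodup, (List.isChain_cons_cons.1 hchain).1, hleft, hchain.tail⟩,
    List.length_ofFn⟩

theorem isChain_insert_of_isChain {R : V → V → Prop} {p s I : List V} {q q' : V}
    (h : (p ++ q :: q' :: s).IsChain R) (hI : (q :: (I ++ [q'])).IsChain R) :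
    (p ++ q :: (I ++ q' :: s)).IsChain R := by
  obtain ⟨hp, -, hs⟩ := List.isChain_append_cons_cons.1 h
  exact List.isChain_split.2 ⟨hp, (List.isChain_split (l₁ := q :: I)).2 ⟨hI, hs⟩⟩

namespace IsTrianglePath

variable {a b : V}

theorem append_singleton {M : List V} {x y : V} (h : IsTrianglePath G a b (M ++ [x]))
    (hy : y ∉ a :: b :: (M ++ [x])) (hxy : G.Adj x y) :
    IsTrianglePath G a b (M ++ [x, y]) where
  nodup := by
    simpa using (List.nodup_concat _ _).2 ⟨hy, h.nodup⟩
  adj := h.adj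
  isChain_left := (List.isChain_append_cons_cons (l₁ := a :: M)).2
    ⟨h.isChain_left, hxy, List.isChain_singleton y⟩
  isChain_right := (List.isChain_append_cons_cons (l₁ := b :: M)).2
    ⟨h.isChain_right, hxy, List.isChain_singleton y⟩

theorem cons {l : List V} {y : V} (h : IsTrianglePath G a b l) (hy : y ∉ a :: b :: l)
    (hya : G.Adj y a) (hyb : G.Adj y b) : IsTrianglePath G y a (b :: l) where
  nodup := List.nodup_cons.2 ⟨hy, h.nodup⟩
  adj := hya
  isChain_left := List.isChain_cons_cons.2 ⟨hyb, h.isChain_right⟩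
  isChain_right := List.isChain_cons_cons.2 ⟨h.adj, h.isChain_right⟩

theorem insert {p s I : List V} {q q' : V} (h : IsTrianglePath G a b (p ++ q :: q' :: s))
    (hI : I.Nodup) (hdisj : ∀ y ∈ I, y ∉ a :: b :: (p ++ q :: q' :: s))
    (hchain : (q :: (I ++ [q'])).IsChain G.Adj) :
    IsTrianglePath G a b (p ++ q :: (I ++ q' :: s)) where
  nodup := by
    have hperm : (a :: b :: (p ++ q :: (I ++ q' :: s))).Perm
        (I ++ a :: b :: (p ++ q :: q' :: s)) := by
      classical
      simp only [List.perm_iff_count, List.count_append, List.count_cons]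
      omega
    rw [hperm.nodup_iff, List.nodup_append']
    exact ⟨hI, h.nodup, hdisj⟩
  adj := h.adj
  isChain_left := isChain_insert_of_isChain (p := a :: p) h.isChain_left hchain
  isChain_right := isChain_insert_of_isChain (p := b :: p) h.isChain_right hchain

theorem of_isPath {u v x z : V} {p : G.Walk x z} (hp : p.IsPath) (hu : u ∉ p.support)
    (hv : v ∉ p.support) (huv : G.Adj u v) (hux : G.Adj u x) (hvx : G.Adj v x) :
    IsTrianglePath G u v p.support where
  nodup := by simp [huv.ne, hu, hv, hp.support_nodup]
  adj := huv
  isChain_left := (Walk.cons hux p).isChain_adj_support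
  isChain_right := (Walk.cons hvx p).isChain_adj_support

end IsTrianglePath

end TrianglePath

/-- Any two distinct vertices of `U` are adjacent in `G` or have `q` or `q'` as a common
neighbor, so that a path in `G` can pass from one to the other using at most one of `q`, `q'`. -/
def IsLinkingPair {V : Type*} (G : SimpleGraph V) (U : Set V) (q q' : V) : Prop :=
  ∀ y ∈ U, ∀ y' ∈ U, y ≠ y' →
    G.Adj y y' ∨ ∃ z, (z = q ∨ z = q') ∧ G.Adj y z ∧ G.Adj z y'

section Linking

variable {V : Type*} {G : SimpleGraph V}

/-- The path visits `u :: us` in order; each step which is not an edge of `G` uses up two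
elements of `M` and inserts one of them. -/
theorem exists_isPath_of_isLinkingPair {U : Set V} {u : V} {us M : List V}
    (hus : (u :: us).Nodup) (hM : M.Nodup) (husU : ∀ y ∈ u :: us, y ∈ U) (hMU : ∀ q ∈ M, q ∉ U)
    (hlink : M.IsChain (IsLinkingPair G U)) :
    ∃ y ∈ U, ∃ p : G.Walk u y, p.IsPath ∧ (∀ w ∈ p.support, w ∈ u :: us ∨ w ∈ M) ∧
      min us.length (2 * (M.length / 2)) ≤ p.length := by
  induction us generalizing u M with
  | nil => exact ⟨u, husU u (by simp), .nil, .nil, by simp, by simp⟩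
  | cons u' us ih =>
    obtain _ | ⟨q, _ | ⟨q', s⟩⟩ := M
    iterate 2 exact ⟨u, husU u (by simp), .nil, .nil, by simp, by simp⟩
    obtain ⟨hu, hus'⟩ := List.nodup_cons.1 hus
    have huU : u ∈ U := husU u (by simp)
    have hus'U : ∀ y ∈ u' :: us, y ∈ U := fun y hy => husU y (List.mem_cons_of_mem u hy)
    have hu'U : u' ∈ U := hus'U u' (by simp)
    have huM : u ∉ q :: q' :: s := fun h => hMU u h huU
    have hne : u ≠ u' := fun h => hu (h ▸ List.mem_cons_self)
    rcases (List.isChain_cons_cons.1 hlink).1 u huU u' hu'U hne with hadj | ⟨z, hz, huz, hzu'⟩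
    · obtain ⟨y, hy, p, hp, hsupp, hlen⟩ := ih hus' hM hus'U hMU hlink
      have hup : u ∉ p.support := fun h => (hsupp u h).elim hu huM
      refine ⟨y, hy, .cons hadj p, hp.cons hup, ?_, ?_⟩
      · grind [Walk.support_cons]
      · simp only [List.length_cons, Walk.length_cons] at hlen ⊢
        omega
    · have hsM : ∀ w ∈ s, w ∈ q :: q' :: s := fun w hw => by simp [hw]
      have hzM : z ∈ q :: q' :: s := by grind
      have hzs : z ∉ s := by grind
      obtain ⟨y, hy, p, hp, hsupp, hlen⟩ := ih hus' hM.of_cons.of_cons hus'U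
        (fun w hw => hMU w (hsM w hw)) hlink.tail.tail
      have hup : u ∉ p.support := fun h => (hsupp u h).elim hu fun h => huM (hsM u h)
      have hzp : z ∉ p.support := fun h => (hsupp z h).elim (fun h => hMU z hzM (hus'U z h)) hzs
      refine ⟨y, hy, .cons huz (.cons hzu' p), (hp.cons hzp).cons ?_, ?_, ?_⟩
      · simpa [huz.ne] using hup
      · grind [Walk.support_cons]
      · simp only [List.length_cons, Walk.length_cons] at hlen ⊢
        omega

end Linking

namespace IsTrianglePath

variable {V : Type*} {G : SimpleGraph V} {a b : V} {l : List V}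

theorem compl_adj_getLast {M : List V} {x y : V} (h : IsTrianglePath G a b (M ++ [x]))
    (hmax : ¬ pathPlus ((M ++ [x]).length + 3) ⊑ G) (hy : y ∉ a :: b :: (M ++ [x])) :
    Gᶜ.Adj x y := by
  have hxy : x ≠ y := by rintro rfl; simp at hy
  exact (compl_adj _ _ _).2 ⟨hxy, fun hadj =>
    hmax ((h.append_singleton hy hadj).isContained (by simp))⟩

theorem compl_adj_left_or_right {y : V} (h : IsTrianglePath G a b l)
    (hmax : ¬ pathPlus (l.length + 3) ⊑ G) (hy : y ∉ a :: b :: l) :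
    Gᶜ.Adj y a ∨ Gᶜ.Adj y b := by
  have hne : y ≠ a ∧ y ≠ b := by simp_all
  by_contra! hadj
  simp only [compl_adj, hne.1, hne.2, ne_eq, not_false_eq_true, true_and, not_not] at hadj
  exact hmax ((h.cons hy hadj.1 hadj.2).isContained (by simp))

theorem isLinkingPair_compl {p s : List V} {q q' : V} (h : IsTrianglePath G a b l)
    (hmax : ¬ pathPlus (l.length + 3) ⊑ G) (hl : l = p ++ q :: q' :: s) :
    IsLinkingPair Gᶜ {y | y ∉ a :: b :: l} q q' := by
  subst hl
  have hinsert {I : List V} (hI : I.Nodup) (hpos : 0 < I.length)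
      (hdisj : ∀ y ∈ I, y ∉ a :: b :: (p ++ q :: q' :: s)) :
      ¬ (q :: (I ++ [q'])).IsChain G.Adj := fun hchain =>
    hmax ((h.insert hI hdisj hchain).isContained (by
      simp only [List.length_append, List.length_cons]
      omega))
  intro y hy y' hy' hne
  have hy_ne : y ≠ q ∧ y ≠ q' := by grind
  have hy_ne' : y' ≠ q ∧ y' ≠ q' := by grind
  by_contra! hcon
  have hyy' : G.Adj y y' := by simpa [hne] using hcon.1
  have hq : G.Adj q y ∨ G.Adj q y' := by
    have := hcon.2 q (Or.inl rfl)
    grind [compl_adj, G.adj_comm]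
  have hq' : G.Adj y q' ∨ G.Adj y' q' := by
    have := hcon.2 q' (Or.inr rfl)
    grind [compl_adj, G.adj_comm]
  rcases hq with hqy | hqy' <;> rcases hq' with hyq' | hyq'
  · exact hinsert (I := [y]) (by simp) (by simp) (by simpa using hy) (by simp [hqy, hyq'])
  · exact hinsert (I := [y, y']) (by simpa) (by simp) (by grind) (by simp [hqy, hyy', hyq'])
  · exact hinsert (I := [y', y]) (by grind) (by simp) (by grind) (by simp [hqy', hyy'.symm, hyq'])
  · exact hinsert (I := [y']) (by simp) (by simp) (by simpa using hy') (by simp [hqy', hyq'])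

theorem exists_compl_isPath {M us : List V} {x u : V} (h : IsTrianglePath G a b (M ++ [x]))
    (hmax : ¬ pathPlus ((M ++ [x]).length + 3) ⊑ G) (hus : (u :: us).Nodup)
    (hout : ∀ y ∈ u :: us, y ∉ a :: b :: (M ++ [x])) :
    ∃ z, ∃ p : Gᶜ.Walk x z, p.IsPath ∧
      (∀ w ∈ p.support, w ∈ u :: us ∨ w ∈ a :: b :: (M ++ [x])) ∧
      min us.length (2 * (M.length / 2)) + 2 ≤ p.length := by
  have hlink : M.IsChain (IsLinkingPair Gᶜ {y | y ∉ a :: b :: (M ++ [x])}) := by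
    refine List.isChain_iff_forall_rel_of_append_cons_cons.2 ?_
    rintro q q' p s rfl
    exact h.isLinkingPair_compl hmax (p := p) (s := s ++ [x]) (by simp)
  have hMsub : ∀ q ∈ M, q ∈ a :: b :: (M ++ [x]) := fun q hq => by simp [hq]
  have hnodup := h.nodup
  have hMnodup : M.Nodup := by grind
  obtain ⟨y, hyU, p, hp, hsupp, hlen⟩ := exists_isPath_of_isLinkingPair hus hMnodup hout
    (fun q hq hqU => hqU (hMsub q hq)) hlink
  obtain ⟨z, hz, hyz⟩ : ∃ z, (z = a ∨ z = b) ∧ Gᶜ.Adj y z := by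
    rcases h.compl_adj_left_or_right hmax hyU with hya | hyb
    exacts [⟨a, Or.inl rfl, hya⟩, ⟨b, Or.inr rfl, hyb⟩]
  have hnotMem (w : V) (hwl : w ∈ a :: b :: (M ++ [x])) (hwM : w ∉ M) : w ∉ p.support := fun hw =>
    (hsupp w hw).elim (fun hwu => hout w hwu hwl) hwM
  have hzp : z ∉ p.support := hnotMem z (by grind) (by grind)
  have hxp : x ∉ (p.concat hyz).support := by
    have hx : x ∉ p.support := hnotMem x (by simp) (by grind)
    grind [Walk.support_concat]
  have hxu : Gᶜ.Adj x u := h.compl_adj_getLast hmax (hout u List.mem_cons_self)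
  refine ⟨z, .cons hxu (p.concat hyz), (hp.concat hzp hyz).cons hxp, ?_, ?_⟩
  · grind [Walk.support_cons, Walk.support_concat]
  · simp only [Walk.length_cons, Walk.length_concat]
    omega

theorem isContained_compl {M us : List V} {x u₁ u₂ u : V} (h : IsTrianglePath G a b (M ++ [x]))
    (hmax : ¬ pathPlus ((M ++ [x]).length + 3) ⊑ G) (hadj : Gᶜ.Adj u₁ u₂)
    (hus : (u₁ :: u₂ :: u :: us).Nodup)
    (hout : ∀ y ∈ u₁ :: u₂ :: u :: us, y ∉ a :: b :: (M ++ [x])) :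
    pathPlus (min us.length (2 * (M.length / 2)) + 5) ⊑ Gᶜ := by
  obtain ⟨hu₁, hus'⟩ := List.nodup_cons.1 hus
  obtain ⟨hu₂, hus''⟩ := List.nodup_cons.1 hus'
  obtain ⟨z, p, hp, hsupp, hlen⟩ := h.exists_compl_isPath hmax hus'' fun y hy =>
    hout y (List.mem_cons_of_mem _ (List.mem_cons_of_mem _ hy))
  have hout₁ : u₁ ∉ a :: b :: (M ++ [x]) := hout u₁ (by simp)
  have hout₂ : u₂ ∉ a :: b :: (M ++ [x]) := hout u₂ (by simp)
  have hu₁p : u₁ ∉ p.support := fun h =>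
    (hsupp u₁ h).elim (fun h => hu₁ (List.mem_cons_of_mem _ h)) hout₁
  have hu₂p : u₂ ∉ p.support := fun h => (hsupp u₂ h).elim hu₂ hout₂
  have hblue := of_isPath hp hu₁p hu₂p hadj (h.compl_adj_getLast hmax hout₁).symm
    (h.compl_adj_getLast hmax hout₂).symm
  refine hblue.isContained ?_
  rw [Walk.length_support]
  omega

end IsTrianglePath

section UpperBound

variable {V : Type*} {G : SimpleGraph V} {t : ℕ}

theorem exists_compl_adj_of_not_isContained {U : Finset V} {n : ℕ} {H : SimpleGraph (Fin n)}
    (hn : n ≤ U.card) (h : ¬ H ⊑ G) : ∃ u ∈ U, ∃ v ∈ U, Gᶜ.Adj u v := by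
  by_contra! hU
  refine h (isContained_of_not_cliqueFree (not_cliqueFree_of_isClique ?_ hn) H)
  intro u hu v hv huv
  simpa [huv] using hU u hu v hv

theorem exists_nodup_cons_cons {U : Finset V} {u₁ u₂ : V} (hne : u₁ ≠ u₂) (hu₁ : u₁ ∈ U)
    (hu₂ : u₂ ∈ U) :
    ∃ us, (u₁ :: u₂ :: us).Nodup ∧ (∀ y ∈ u₁ :: u₂ :: us, y ∈ U) ∧ U.card ≤ us.length + 2 := by
  classical
  have hmem (y : V) : y ∈ (U \ {u₁, u₂}).toList ↔ y ∈ U ∧ y ≠ u₁ ∧ y ≠ u₂ := by simp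
  have hnodup : (U \ {u₁, u₂}).toList.Nodup := Finset.nodup_toList _
  refine ⟨(U \ {u₁, u₂}).toList, ?_, ?_, ?_⟩
  · grind
  · grind
  · rw [Finset.length_toList, ← Finset.card_pair hne]
    exact Nat.sub_le_iff_le_add.1 (Finset.le_card_sdiff _ _)

theorem pathPlus_succ_isContained_or_compl [Fintype V] (ht : 3 ≤ t)
    (hV : 2 * t + 1 ≤ Fintype.card V) (h : pathPlus t ⊑ G) :
    pathPlus (t + 1) ⊑ G ∨ pathPlus (t + 1) ⊑ Gᶜ := by
  classical
  refine or_iff_not_imp_left.2 fun hmax => ?_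
  obtain ⟨n, rfl⟩ := Nat.exists_eq_add_of_le' ht
  obtain ⟨a, b, l, hl, hlen⟩ := exists_isTrianglePath_of_isContained (n := n + 1) h
  obtain rfl | ⟨M, x, rfl⟩ := List.eq_nil_or_concat' l
  · simp at hlen
  have hmax' : ¬ pathPlus ((M ++ [x]).length + 3) ⊑ G := by rwa [hlen]
  let U : Finset V := (a :: b :: (M ++ [x])).toFinsetᶜ
  have hU : n + 4 ≤ U.card := by
    rw [Finset.card_compl, List.toFinset_card_of_nodup hl.nodup]
    simp only [List.length_cons, hlen]
    omega
  obtain ⟨u₁, hu₁, u₂, hu₂, hadj⟩ := exists_compl_adj_of_not_isContained hU hmax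
  obtain ⟨us', hus, husU, huslen⟩ := exists_nodup_cons_cons hadj.ne hu₁ hu₂
  obtain ⟨u, us, rfl⟩ := List.exists_cons_of_length_pos (by omega : 0 < us'.length)
  rw [List.length_cons] at huslen
  have hout (y : V) (hy : y ∈ u₁ :: u₂ :: u :: us) : y ∉ a :: b :: (M ++ [x]) := by
    simpa only [U, Finset.mem_compl, List.mem_toFinset] using husU y hy
  have hM : M.length = n := by simpa using hlen
  exact (pathPlus_isContained_pathPlus (by omega)).trans (hl.isContained_compl hmax' hadj hus hout)

theorem pathPlus_isContained_or_compl [Fintype V] (h6 : 6 ≤ Fintype.card V)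
    (ht : 3 ≤ t) (hV : 2 * t ≤ Fintype.card V + 1) : pathPlus t ⊑ G ∨ pathPlus t ⊑ Gᶜ := by
  induction t, ht using Nat.le_induction with
  | base =>
    exact (not_cliqueFree_three_or_compl h6).imp (isContained_of_not_cliqueFree · _)
      (isContained_of_not_cliqueFree · _)
  | succ t ht ih =>
    rcases ih (by omega) with h | h
    · exact pathPlus_succ_isContained_or_compl ht (by omega) h
    · simpa [or_comm] using pathPlus_succ_isContained_or_compl ht (by omega) h

end UpperBound

theorem ramsey_pathPlus_general_general {α : Type*} {F : SimpleGraph α} {t : ℕ}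
    (hF : ¬ F.Colorable 2) (hFt : F ⊑ pathPlus t) (ht : 4 ≤ t) :
    (∀ c : Sym2 (Fin (2 * t - 1)) → Fin 2, HasCopyIn c 0 F ∨ HasCopyIn c 1 (pathPlus t)) ∧
      ramsey2 F (pathPlus t) = 2 * t - 1 := by
  have hup : ∀ c : Sym2 (Fin (2 * t - 1)) → Fin 2,
      HasCopyIn c 0 F ∨ HasCopyIn c 1 (pathPlus t) :=
    forall_hasCopyIn_or_iff.2 fun G =>
      (pathPlus_isContained_or_compl (by simp; omega) (by omega) (by simp; omega)).imp_left
        hFt.trans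
  refine ⟨hup, le_antisymm (Nat.sInf_le hup) (le_csInf ⟨_, hup⟩ fun n hn => ?_)⟩
  have hlow := mul_card_sub_one_lt_card hF (pathPlus_connected (by omega))
    (forall_hasCopyIn_or_iff.1 hn)
  rw [Fintype.card_fin, Fintype.card_fin] at hlow
  omega

/-- For `t ≥ s ≥ 4`, every red/blue (`0`/`1`) coloring of the edges of the complete graph
on `2t - 1` vertices contains a red copy of `P_s^+` or a blue copy of `P_t^+`; together
with the lower-bound construction, `R(P_s^+, P_t^+) = 2t - 1`. -/
theorem ramsey_pathPlus_general (s t : ℕ) (hs : 4 ≤ s) (hst : s ≤ t) :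
    (∀ c : Sym2 (Fin (2 * t - 1)) → Fin 2,
      HasCopyIn c 0 (pathPlus s) ∨ HasCopyIn c 1 (pathPlus t)) ∧
    ramsey2 (pathPlus s) (pathPlus t) = 2 * t - 1 :=
  ramsey_pathPlus_general_general (pathPlus_not_colorable_two (by omega))
    (pathPlus_isContained_pathPlus hst) (by omega)
end
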